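/- Let n be a natural number, let M be a connected Hausdorff topological space locally homeomorphic to the euclidean space ℝⁿ (a topological n-manifold), and let G be a countable group acting by homeomorphisms on M such that the orbit space M/G is Hausdorff. If g ∈ G is an element whose fixed point set {x ∈ M : g•x = x} has nonempty interior, then g•x = x for every x ∈ M. -/

import Mathlib

section
open Set Filter Topology MeasureTheory Metric

namespace Newm

/-- `ℝⁿ` with the sup norm. -/
abbrev EE (n : ℕ) := Fin n → ℝ

variable {n : ℕ}

lemma cont_det {X : Type*} [TopologicalSpace X] {f : X → (EE n →L[ℝ] EE n)} (hf : Continuous f) :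
    Continuous fun x => (f x).det :=
  (ContinuousLinearMap.continuous_det (𝕜 := ℝ) (E := EE n)).comp hf

lemma det_interp (v : Fin (n+1) → ℝ) (hv : Function.Injective v) :
    ∃ c : Fin (n+1) → ℝ, ∀ T : EE n →L[ℝ] EE n,
      T.det = ∑ k, c k * (v k • ContinuousLinearMap.id ℝ (EE n) + T).det := by
  classical
  refine ⟨fun k => (Lagrange.basis Finset.univ v k).eval 0, fun T => ?_⟩
  set A : Matrix (Fin n) (Fin n) ℝ := LinearMap.toMatrix' (T : EE n →ₗ[ℝ] EE n) with hA
  set P : Polynomial ℝ := Matrix.det ((Polynomial.X : Polynomial ℝ) • (1 : Matrix (Fin n) (Fin n) ℝ).map Polynomial.C + A.map Polynomial.C) with hP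
  have hdeg : P.degree < (Finset.univ : Finset (Fin (n+1))).card := by
    have h := Polynomial.natDegree_det_X_add_C_le (1 : Matrix (Fin n) (Fin n) ℝ) A
    have h2 := Polynomial.degree_le_natDegree (p := P)
    refine lt_of_le_of_lt h2 ?_
    have : P.natDegree < n + 1 := by
      have : Fintype.card (Fin n) = n := Fintype.card_fin n
      rw [← hP] at h
      omega
    rw [Finset.card_univ, Fintype.card_fin]
    exact_mod_cast this
  have hev : ∀ s : ℝ, P.eval s = (s • ContinuousLinearMap.id ℝ (EE n) + T).det := by
    intro s
    have h1 : (s • ContinuousLinearMap.id ℝ (EE n) + T).det = (s • (1 : Matrix (Fin n) (Fin n) ℝ) + A).det := by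
      rw [ContinuousLinearMap.det, ← LinearMap.det_toMatrix']
      congr 1
      ext i j
      simp [hA, LinearMap.toMatrix'_apply, Matrix.one_apply, Pi.single_apply]
    rw [h1, hP, ← Polynomial.coe_evalRingHom, RingHom.map_det]
    congr 1
    ext i j
    simp [Matrix.one_apply]
    split_ifs <;> simp
  have h := Lagrange.eq_interpolate (s := Finset.univ) (v := v) (f := P) hv.injOn hdeg
  have h0 := congrArg (Polynomial.eval 0) h
  rw [hev 0, Lagrange.interpolate_apply, Polynomial.eval_finsetSum] at h0
  simp only [Polynomial.eval_mul, Polynomial.eval_C, hev] at h0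
  simp only [zero_smul, zero_add] at h0
  rw [h0]
  exact Finset.sum_congr rfl fun k _ => mul_comm _ _

lemma det_pos_of_norm_lt (T : EE n →L[ℝ] EE n) {s : ℝ} (hs : ‖T‖ < s) :
    0 < (s • ContinuousLinearMap.id ℝ (EE n) + T).det := by
  have hs0 : 0 < s := lt_of_le_of_lt (norm_nonneg _) hs
  let g : ℝ → ℝ := fun t => (s • ContinuousLinearMap.id ℝ (EE n) + t • T).det
  have hg : Continuous g := by
    exact cont_det (by fun_prop)
  have hne : ∀ t ∈ Icc (0:ℝ) 1, g t ≠ 0 := by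
    intro t ht h0
    have := LinearMap.bot_lt_ker_of_det_eq_zero (f := ((s • ContinuousLinearMap.id ℝ (EE n) + t • T : EE n →L[ℝ] EE n) : EE n →ₗ[ℝ] EE n)) h0
    obtain ⟨v, hv, hv0⟩ := (Submodule.ne_bot_iff _).1 this.ne'
    rw [LinearMap.mem_ker] at hv
    have hv' : s • v = - (t • T v) := by
      have : s • v + t • T v = 0 := by simpa using hv
      exact eq_neg_of_add_eq_zero_left this
    have h1 : s * ‖v‖ ≤ ‖T‖ * ‖v‖ := by
      calc s * ‖v‖ = ‖s • v‖ := by rw [norm_smul, Real.norm_of_nonneg hs0.le]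
        _ = |t| * ‖T v‖ := by rw [hv', norm_neg, norm_smul, Real.norm_eq_abs]
        _ ≤ 1 * ‖T v‖ := by
            gcongr
            rw [abs_of_nonneg ht.1]; exact ht.2
        _ ≤ ‖T‖ * ‖v‖ := by rw [one_mul]; exact T.le_opNorm v
    have : 0 < ‖v‖ := norm_pos_iff.2 hv0
    nlinarith
  have h0 : 0 < g 0 := by
    simp only [g, zero_smul, add_zero]
    rw [ContinuousLinearMap.det]
    simp
    positivity
  by_contra hneg
  have h1 : g 1 ≤ 0 := by simpa [g] using not_lt.1 hneg
  obtain ⟨t, ht, ht0⟩ := intermediate_value_Icc' (zero_le_one) hg.continuousOn ⟨h1, h0.le⟩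
  exact hne t ht ht0

lemma bij_of_lip {A : EE n → EE n} {C : NNReal} (hA : LipschitzWith C A) {s : ℝ} (hs : (C:ℝ) < s) :
    Function.Bijective (fun x => s • x + A x) := by
  have hs0 : 0 < s := lt_of_le_of_lt C.2 hs
  constructor
  · intro x y hxy
    have hxy : s • x + A x = s • y + A y := hxy
    have h1 : s • (x - y) = A y - A x := by
      rw [smul_sub]; rw [sub_eq_sub_iff_add_eq_add, hxy, add_comm]
    have h2 := hA.dist_le_mul y x
    rw [dist_eq_norm, dist_eq_norm, ← h1, norm_smul, Real.norm_of_nonneg hs0.le, norm_sub_rev y x] at h2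
    by_contra hne
    have : 0 < ‖x - y‖ := norm_pos_iff.2 (sub_ne_zero.2 hne)
    nlinarith
  · intro y
    let f : EE n → EE n := fun x => s⁻¹ • (y - A x)
    have hf : ContractingWith (C / s.toNNReal) f := by
      constructor
      · rw [div_lt_one (by simpa using hs0)]
        rw [← NNReal.coe_lt_coe, Real.coe_toNNReal _ hs0.le]; exact hs
      · refine LipschitzWith.of_dist_le_mul fun a b => ?_
        have := hA.dist_le_mul b a
        simp only [f, dist_eq_norm, ← smul_sub, norm_smul, norm_inv, Real.norm_of_nonneg hs0.le] at *
        rw [NNReal.coe_div, Real.coe_toNNReal _ hs0.le]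
        have e : y - A a - (y - A b) = A b - A a := by abel
        rw [e]
        rw [norm_sub_rev b a] at this
        calc s⁻¹ * ‖A b - A a‖ ≤ s⁻¹ * (C * ‖a - b‖) := by gcongr
          _ = _ := by field_simp
    refine ⟨hf.fixedPoint, ?_⟩
    have h := hf.fixedPoint_isFixedPt
    have h : s⁻¹ • (y - A hf.fixedPoint) = hf.fixedPoint := h
    show s • hf.fixedPoint + A hf.fixedPoint = y
    nth_rw 1 [← h]
    rw [smul_inv_smul₀ hs0.ne']
    simp

lemma vol_eq {A : EE n → EE n} (hA1 : ContDiff ℝ 1 A) {C : NNReal} (hA : LipschitzWith C A) {s : ℝ}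
    (hs : (C:ℝ) < s) (B : Set (EE n)) (hB : MeasurableSet B) :
    ∫ x in B, (s • ContinuousLinearMap.id ℝ (EE n) + fderiv ℝ A x).det
      = ∫ _x in (fun x => s • x + A x) '' B, (1:ℝ) := by
  rw [integral_image_eq_integral_abs_det_fderiv_smul (volume) hB
    (f' := fun x => s • ContinuousLinearMap.id ℝ (EE n) + fderiv ℝ A x) ?_ (bij_of_lip hA hs).1.injOn]
  · refine setIntegral_congr_fun hB fun x _ => ?_
    have : ‖fderiv ℝ A x‖ < s := lt_of_le_of_lt (norm_fderiv_le_of_lipschitz ℝ hA) hs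
    have := det_pos_of_norm_lt _ this
    simp only [smul_eq_mul, mul_one]
    rw [abs_of_pos this]
  · intro x _
    apply HasFDerivAt.hasFDerivWithinAt
    have h1 : HasFDerivAt A (fderiv ℝ A x) x := (hA1.differentiable (by norm_num) x).hasFDerivAt
    have h2 : HasFDerivAt (fun x : EE n => s • x) (s • ContinuousLinearMap.id ℝ (EE n)) x :=
      (hasFDerivAt_id x).const_smul s
    exact h2.add h1

lemma key_s {A u : EE n → EE n} (hA1 : ContDiff ℝ 1 A) (hu1 : ContDiff ℝ 1 u)
    (hu : HasCompactSupport u) {C : NNReal} (hA : LipschitzWith C A) (hAu : LipschitzWith C (A + u))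
    {s : ℝ} (hs : (C:ℝ) < s) :
    ∫ x, ((s • ContinuousLinearMap.id ℝ (EE n) + (fderiv ℝ A x + fderiv ℝ u x)).det -
      (s • ContinuousLinearMap.id ℝ (EE n) + fderiv ℝ A x).det) = 0 := by
  obtain ⟨R, hR⟩ := hu.isBounded.subset_closedBall 0
  have cA := hA1.continuous_fderiv (by norm_num)
  have cu := hu1.continuous_fderiv (by norm_num)
  have hfu : ∀ x, fderiv ℝ (A + u) x = fderiv ℝ A x + fderiv ℝ u x := fun x =>
    fderiv_add (hA1.differentiable (by norm_num) x) (hu1.differentiable (by norm_num) x)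
  have h0 : ∀ x ∉ closedBall (0 : EE n) R, fderiv ℝ u x = 0 := by
    intro x hx
    by_contra h
    exact hx (hR (support_fderiv_subset ℝ h))
  rw [← setIntegral_eq_integral_of_forall_compl_eq_zero (s := closedBall (0 : EE n) R)]
  · rw [integral_sub]
    · have e1 := vol_eq hA1 hA hs (closedBall (0 : EE n) R) measurableSet_closedBall
      have e2 := vol_eq (A := A + u) (hA1.add hu1) hAu hs (closedBall (0 : EE n) R) measurableSet_closedBall
      have e3 : (fun x => s • x + (A + u) x) '' (closedBall (0 : EE n) R) =
          (fun x => s • x + A x) '' (closedBall (0 : EE n) R) := by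
        rw [← compl_inj_iff, ← image_compl_eq (bij_of_lip hA hs), ← image_compl_eq (bij_of_lip hAu hs)]
        refine image_congr fun x hx => ?_
        have : u x = 0 := by
          by_contra h
          exact hx (hR (subset_tsupport _ h))
        simp [this]
      rw [sub_eq_zero, e1]
      rw [e3] at e2
      rw [← e2]
      refine setIntegral_congr_fun measurableSet_closedBall fun x _ => ?_
      show _ = (_ + fderiv ℝ (A + u) x).det
      rw [hfu]
    · exact (Continuous.continuousOn (cont_det (by fun_prop))).integrableOn_compact (isCompact_closedBall _ _)
    · exact (Continuous.continuousOn (cont_det (by fun_prop))).integrableOn_compact (isCompact_closedBall _ _)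
  · intro x hx
    rw [h0 x hx, add_zero, sub_self]

lemma key_c {A u : EE n → EE n} (hA1 : ContDiff ℝ 1 A) (hu1 : ContDiff ℝ 1 u)
    (hu : HasCompactSupport u) (hAc : HasCompactSupport A) :
    ∫ x, ((fderiv ℝ A x + fderiv ℝ u x).det - (fderiv ℝ A x).det) = 0 := by
  obtain ⟨C1, hC1⟩ := ContDiff.lipschitzWith_of_hasCompactSupport hAc hA1 (by norm_num)
  obtain ⟨C2, hC2⟩ := ContDiff.lipschitzWith_of_hasCompactSupport (hAc.add hu) (hA1.add hu1) (by norm_num)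
  set C := max C1 C2
  have h1 : LipschitzWith C A := hC1.weaken (le_max_left _ _)
  have h2 : LipschitzWith C (A + u) := hC2.weaken (le_max_right _ _)
  let v : Fin (n+1) → ℝ := fun k => C + 1 + k
  have hv : Function.Injective v := by
    intro a b hab
    simp only [v] at hab
    have : (a : ℝ) = b := by linarith
    exact Fin.ext (by exact_mod_cast this)
  obtain ⟨c, hc⟩ := det_interp v hv
  have cA := hA1.continuous_fderiv (by norm_num)
  have cu := hu1.continuous_fderiv (by norm_num)
  have e : ∀ x, ((fderiv ℝ A x + fderiv ℝ u x).det - (fderiv ℝ A x).det) =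
    ∑ k, c k * ((v k • ContinuousLinearMap.id ℝ (EE n) + (fderiv ℝ A x + fderiv ℝ u x)).det -
      (v k • ContinuousLinearMap.id ℝ (EE n) + fderiv ℝ A x).det) := by
    intro x
    rw [hc (fderiv ℝ A x + fderiv ℝ u x), hc (fderiv ℝ A x), ← Finset.sum_sub_distrib]
    exact Finset.sum_congr rfl fun k _ => by ring
  simp_rw [e]
  rw [integral_finsetSum]
  · refine Finset.sum_eq_zero fun k _ => ?_
    rw [integral_const_mul, key_s hA1 hu1 hu h1 h2, mul_zero]
    simp only [v]
    have : (0:ℝ) ≤ (k:ℕ) := Nat.cast_nonneg _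
    linarith
  · intro k _
    refine Continuous.integrable_of_hasCompactSupport
      (continuous_const.mul ((cont_det (by fun_prop)).sub (cont_det (by fun_prop)))) ?_
    refine (hu.fderiv ℝ).mono' ?_
    intro x hx
    refine subset_tsupport _ ?_
    intro h
    apply hx
    simp [h]

/-- Key lemma: the integral of the Jacobian determinant does not change under compactly
supported perturbations. -/
lemma key {A u : EE n → EE n} (hA1 : ContDiff ℝ 1 A) (hu1 : ContDiff ℝ 1 u)
    (hu : HasCompactSupport u) :
    ∫ x, ((fderiv ℝ A x + fderiv ℝ u x).det - (fderiv ℝ A x).det) = 0 := by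
  obtain ⟨R, hR⟩ := hu.isBounded.subset_closedBall 0
  let χ : ContDiffBump (0 : EE n) := ⟨max R 0 + 1, max R 0 + 2, by positivity, by linarith⟩
  have hχ : ContDiff ℝ 1 (χ : EE n → ℝ) := χ.contDiff
  have h := key_c (A := fun x => χ x • A x) (u := u) (hχ.smul hA1) hu1 hu
    (χ.hasCompactSupport.smul_right)
  rw [← h]
  congr 1
  ext x
  by_cases hx : x ∈ tsupport u
  · have hx' : x ∈ ball (0 : EE n) (max R 0 + 1) := by
      have := hR hx
      rw [mem_closedBall] at this
      rw [mem_ball]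
      exact lt_of_le_of_lt (this.trans (le_max_left R 0)) (by linarith)
    have : (fun x => χ x • A x) =ᶠ[𝓝 x] A := by
      filter_upwards [isOpen_ball.mem_nhds hx'] with y hy
      rw [χ.one_of_mem_closedBall (ball_subset_closedBall hy), one_smul]
    rw [this.fderiv_eq]
  · have : fderiv ℝ u x = 0 := by
      by_contra h
      exact hx (support_fderiv_subset ℝ h)
    simp [this]

end Newm
end

section
open Set Filter Topology MeasureTheory Metric

namespace Newm
variable {n : ℕ}

/-- smooth step -/
noncomputable def Rf (s : ℝ) : ℝ := Real.smoothTransition ((s + 1) / 2)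

lemma Rf_one {s : ℝ} (h : 1 ≤ s) : Rf s = 1 := Real.smoothTransition.one_of_one_le (by linarith)
lemma Rf_zero {s : ℝ} (h : s ≤ -1) : Rf s = 0 := Real.smoothTransition.zero_of_nonpos (by linarith)
lemma Rf_contDiff : ContDiff ℝ 1 Rf := by
  have : ContDiff ℝ (1:ℕ∞) Real.smoothTransition := Real.smoothTransition.contDiff
  have h : ContDiff ℝ 1 Real.smoothTransition := by exact_mod_cast this
  exact h.comp (by fun_prop)

/-- coordinatewise step map -/
noncomputable def Psi (δ : ℝ) (y : EE n) : EE n := fun i => Rf (y i / δ)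

lemma Psi_contDiff (δ : ℝ) : ContDiff ℝ 1 (Psi δ : EE n → EE n) := by
  rw [contDiff_pi]
  intro i
  exact Rf_contDiff.comp (by fun_prop)

/-- degree integral -/
noncomputable def II (δ : ℝ) (q : EE n → EE n) (V : Set (EE n)) : ℝ :=
  ∫ x in V, (fderiv ℝ (fun x => Psi δ (q x)) x).det

lemma det_zero_of_coord {a : EE n → EE n} {x : EE n} (ha : DifferentiableAt ℝ a x) (i : Fin n)
    (h : ∀ᶠ y in 𝓝 x, a y i = a x i) : (fderiv ℝ a x).det = 0 := by
  rw [ContinuousLinearMap.det, ← LinearMap.det_toMatrix']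
  apply Matrix.det_eq_zero_of_row_eq_zero i
  intro j
  rw [LinearMap.toMatrix'_apply]
  have h1 : HasFDerivAt (fun y => a y i) ((ContinuousLinearMap.proj i).comp (fderiv ℝ a x)) x :=
    (hasFDerivAt_pi'.1 ha.hasFDerivAt) i
  have h2 : HasFDerivAt (fun y => a y i) (0 : EE n →L[ℝ] ℝ) x :=
    (hasFDerivAt_const (a x i) x).congr_of_eventuallyEq h
  have := h1.unique h2
  exact congrArg (fun L : EE n →L[ℝ] ℝ => L (Pi.single j 1)) this

lemma intOn_det {a : EE n → EE n} (ha : ContDiff ℝ 1 a) {V : Set (EE n)}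
    (hb : Bornology.IsBounded V) : IntegrableOn (fun x => (fderiv ℝ a x).det) V := by
  obtain ⟨R, hR⟩ := hb.subset_closedBall 0
  exact ((cont_det (ha.continuous_fderiv (by norm_num))).continuousOn.integrableOn_compact
    (isCompact_closedBall _ _)).mono_set hR

lemma exists_cutoff {K V : Set (EE n)} (hK : IsCompact K) (hV : IsOpen V) (hKV : K ⊆ V) :
    ∃ χ : EE n → ℝ, ContDiff ℝ 1 χ ∧ HasCompactSupport χ ∧ tsupport χ ⊆ V ∧
      (∀ x ∈ K, ∀ᶠ y in 𝓝 x, χ y = 1) ∧ ∀ x, χ x ∈ Icc (0:ℝ) 1 := by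
  obtain ⟨L, hL, hKL, hLV⟩ := exists_compact_between hK hV hKV
  obtain ⟨f, h1, h0, hf⟩ := exists_contMDiffMap_one_nhds_of_subset_interior
    (modelWithCornersSelf ℝ (EE n)) (n := (1:ℕ∞)) hK.isClosed hKL
  have hts : tsupport f ⊆ L := by
    refine closure_minimal (fun x hx => ?_) hL.isClosed
    by_contra h
    exact hx (h0 x h)
  refine ⟨f, by exact_mod_cast f.contMDiff.contDiff, hL.of_isClosed_subset (isClosed_tsupport _) hts, hts.trans hLV, ?_, hf⟩
  intro x hx
  exact (eventually_nhdsSet_iff_forall.1 h1) x hx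

lemma J_eq {a b : EE n → EE n} (ha : ContDiff ℝ 1 a) (hb : ContDiff ℝ 1 b) {K V : Set (EE n)}
    (hK : IsCompact K) (hV : IsOpen V) (hVb : Bornology.IsBounded V) (hKV : K ⊆ V)
    (h : ∀ x ∈ V \ K, ∃ i, ∀ᶠ y in 𝓝 x, a y i = a x i ∧ b y i = a x i) :
    ∫ x in V, (fderiv ℝ a x).det = ∫ x in V, (fderiv ℝ b x).det := by
  obtain ⟨χ, hχ, hχc, hχV, hχ1, -⟩ := exists_cutoff hK hV hKV
  set u : EE n → EE n := fun x => χ x • (b x - a x) with hu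
  have hu1 : ContDiff ℝ 1 u := hχ.smul (hb.sub ha)
  have huc : HasCompactSupport u := hχc.smul_right
  have hk := key ha hu1 huc
  have hd : ∀ {f : EE n → EE n}, ContDiff ℝ 1 f → ∀ x, DifferentiableAt ℝ f x :=
    fun hf x => hf.differentiable (by norm_num) x
  have hau : ∀ x, fderiv ℝ a x + fderiv ℝ u x = fderiv ℝ (a + u) x := fun x =>
    (fderiv_add (hd ha x) (hd hu1 x)).symm
  rw [← setIntegral_eq_integral_of_forall_compl_eq_zero (s := V)] at hk
  · have e : ∫ x in V, ((fderiv ℝ a x + fderiv ℝ u x).det - (fderiv ℝ a x).det)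
        = ∫ x in V, ((fderiv ℝ b x).det - (fderiv ℝ a x).det) := by
      refine setIntegral_congr_fun hV.measurableSet fun x hx => ?_
      simp only [hau]
      congr 1
      by_cases hxK : x ∈ K
      · have : (a + u) =ᶠ[𝓝 x] b := by
          filter_upwards [hχ1 x hxK] with y hy
          simp [hu, hy]
        rw [this.fderiv_eq]
      · obtain ⟨i, hi⟩ := h x ⟨hx, hxK⟩
        have hx0 := hi.self_of_nhds
        rw [det_zero_of_coord (hd hb x) i, det_zero_of_coord (a := a + u) (hd (ha.add hu1) x) i]
        · filter_upwards [hi] with y hy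
          simp [hu, hy.1, hy.2, hx0.2]
        · filter_upwards [hi] with y hy
          rw [hy.2, hx0.2]
    rw [e, integral_sub (intOn_det hb hVb) (intOn_det ha hVb)] at hk
    linarith
  · intro x hx
    have : fderiv ℝ u x = 0 := by
      by_contra h
      have h1 : x ∈ tsupport u := support_fderiv_subset ℝ h
      have h2 : tsupport u ⊆ tsupport χ := closure_mono fun y hy h0 => hy (by simp [hu, h0])
      exact hx (hχV (h2 h1))
    simp [this]

lemma exists_coord {y : EE n} {c : ℝ} (hc : 0 ≤ c) (h : c < ‖y‖) : ∃ i, c < |y i| := by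
  by_contra hcon
  push Not at hcon
  exact absurd ((pi_norm_le_iff_of_nonneg hc).2 fun i => by simpa using hcon i) (not_le.2 h)

lemma II_eq {q0 q1 : EE n → EE n} (h0 : ContDiff ℝ 1 q0) (h1 : ContDiff ℝ 1 q1) {V : Set (EE n)}
    (hV : IsOpen V) (hVb : Bornology.IsBounded V) {δ δ0 δ1 r : ℝ} (hδ0 : 0 < δ0) (hδ1 : 0 < δ1)
    (hd0 : δ0 ≤ δ) (hd1 : δ1 ≤ δ) (hr : 0 < r) (hq : ∀ x ∈ closure V, ‖q1 x - q0 x‖ < r)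
    (hf : ∀ x ∈ frontier V, δ + r < ‖q0 x‖) :
    II δ0 q0 V = II δ1 q1 V := by
  have hδ : 0 < δ := by linarith
  have hcV : IsCompact (closure V) := hVb.isCompact_closure
  refine J_eq (K := closure V ∩ {x | ‖q0 x‖ ≤ δ + r}) ((Psi_contDiff δ0).comp h0) ((Psi_contDiff δ1).comp h1)
    (hcV.inter_right (isClosed_le h0.continuous.norm continuous_const)) hV hVb ?_ ?_
  · rintro x ⟨hx, hx2⟩
    by_contra hxV
    have : x ∈ frontier V := by rw [hV.frontier_eq]; exact ⟨hx, hxV⟩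
    exact absurd (hf x this) (not_lt.2 hx2)
  · rintro x ⟨hx, hxK⟩
    have hx2 : δ + r < ‖q0 x‖ := by
      by_contra h
      exact hxK ⟨subset_closure hx, not_lt.1 h⟩
    obtain ⟨i, hi⟩ := exists_coord (by linarith) hx2
    refine ⟨i, ?_⟩
    have hc : Continuous fun y => q0 y i := (continuous_apply i).comp h0.continuous
    have hcoord : ∀ y ∈ V, |q1 y i - q0 y i| < r := fun y hy =>
      lt_of_le_of_lt (norm_le_pi_norm (q1 y - q0 y) i) (hq y (subset_closure hy))
    rcases lt_abs.1 hi with hi | hi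
    · have ev : ∀ᶠ y in 𝓝 x, δ + r < q0 y i := hc.continuousAt.eventually (lt_mem_nhds hi)
      have e1 : ∀ t d : ℝ, 0 < d → d ≤ δ → δ < t → Rf (t / d) = 1 := fun t d hd hd' ht =>
        Rf_one (by rw [le_div_iff₀ hd]; linarith)
      filter_upwards [ev, hV.mem_nhds hx] with y hy hyV
      have := abs_lt.1 (hcoord y hyV)
      show Rf (q0 y i / δ0) = Rf (q0 x i / δ0) ∧ Rf (q1 y i / δ1) = Rf (q0 x i / δ0)
      rw [e1 _ _ hδ0 hd0 (by linarith), e1 _ _ hδ0 hd0 (by linarith), e1 _ _ hδ1 hd1 (by linarith)]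
      exact ⟨rfl, rfl⟩
    · have ev : ∀ᶠ y in 𝓝 x, q0 y i < -(δ + r) := hc.continuousAt.eventually (gt_mem_nhds (by linarith))
      have e1 : ∀ t d : ℝ, 0 < d → d ≤ δ → t < -δ → Rf (t / d) = 0 := fun t d hd hd' ht =>
        Rf_zero (by rw [div_le_iff₀ hd]; linarith)
      filter_upwards [ev, hV.mem_nhds hx] with y hy hyV
      have := abs_lt.1 (hcoord y hyV)
      show Rf (q0 y i / δ0) = Rf (q0 x i / δ0) ∧ Rf (q1 y i / δ1) = Rf (q0 x i / δ0)
      rw [e1 _ _ hδ0 hd0 (by linarith), e1 _ _ hδ0 hd0 (by linarith), e1 _ _ hδ1 hd1 (by linarith)]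
      exact ⟨rfl, rfl⟩

lemma det_Psi_zero {q : EE n → EE n} (hq : ContDiff ℝ 1 q) {δ : ℝ} (hδ : 0 < δ) {x : EE n}
    (hx : δ < ‖q x‖) : (fderiv ℝ (fun x => Psi δ (q x)) x).det = 0 := by
  obtain ⟨i, hi⟩ := exists_coord hδ.le hx
  have hdiff : DifferentiableAt ℝ (fun x => Psi δ (q x)) x :=
    ((Psi_contDiff δ).comp hq).differentiable (by norm_num) x
  have hc : Continuous fun y => q y i := (continuous_apply i).comp hq.continuous
  refine det_zero_of_coord hdiff i ?_
  rcases lt_abs.1 hi with hi | hi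
  · have ev : ∀ᶠ y in 𝓝 x, δ < q y i := hc.continuousAt.eventually (lt_mem_nhds hi)
    filter_upwards [ev] with y hy
    simp only [Psi]
    rw [Rf_one, Rf_one] <;> rw [le_div_iff₀ hδ] <;> linarith
  · have ev : ∀ᶠ y in 𝓝 x, q y i < -δ := hc.continuousAt.eventually (gt_mem_nhds (by linarith))
    filter_upwards [ev] with y hy
    simp only [Psi]
    rw [Rf_zero, Rf_zero] <;> rw [div_le_iff₀ hδ] <;> linarith

lemma int_step {δ : ℝ} (hδ : 0 < δ) : ∫ s, deriv (fun s => Rf (s / δ)) s = 1 := by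
  have hC : ContDiff ℝ 1 (fun s => Rf (s / δ)) := Rf_contDiff.comp (by fun_prop)
  have h := integral_of_hasDerivAt_of_tendsto (f := fun s => Rf (s / δ)) (f' := deriv (fun s => Rf (s / δ)))
    (m := 0) (n := 1) (fun x => (hC.differentiable (by norm_num) x).hasDerivAt) ?_ ?_ ?_
  · rw [h]; norm_num
  · refine (hC.continuous_deriv (by norm_num)).integrable_of_hasCompactSupport ?_
    refine HasCompactSupport.intro (K := Icc (-δ) δ) isCompact_Icc fun x hx => ?_
    by_cases h1 : x < -δ
    · have : (fun s => Rf (s / δ)) =ᶠ[𝓝 x] fun _ => 0 := by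
        filter_upwards [gt_mem_nhds h1] with y hy
        exact Rf_zero (by rw [div_le_iff₀ hδ]; linarith)
      rw [this.deriv_eq]; simp
    · have h2 : δ < x := by
        by_contra h2
        exact hx ⟨not_lt.1 h1, not_lt.1 h2⟩
      have : (fun s => Rf (s / δ)) =ᶠ[𝓝 x] fun _ => 1 := by
        filter_upwards [lt_mem_nhds h2] with y hy
        exact Rf_one (by rw [le_div_iff₀ hδ]; linarith)
      rw [this.deriv_eq]; simp
  · refine tendsto_const_nhds.congr' ?_
    filter_upwards [eventually_le_atBot (-δ)] with y hy
    exact (Rf_zero (by rw [div_le_iff₀ hδ]; linarith)).symm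
  · refine tendsto_const_nhds.congr' ?_
    filter_upwards [eventually_ge_atTop δ] with y hy
    exact (Rf_one (by rw [le_div_iff₀ hδ]; linarith)).symm

lemma det_Psi {δ : ℝ} (y : EE n) :
    (fderiv ℝ (Psi δ) y).det = ∏ i, deriv (fun s => Rf (s / δ)) (y i) := by
  have hC : ContDiff ℝ 1 (fun s => Rf (s / δ)) := Rf_contDiff.comp (by fun_prop)
  have hd : DifferentiableAt ℝ (Psi δ) y := (Psi_contDiff δ).differentiable (by norm_num) y
  rw [ContinuousLinearMap.det, ← LinearMap.det_toMatrix']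
  have : LinearMap.toMatrix' ((fderiv ℝ (Psi δ) y : EE n →L[ℝ] EE n) : EE n →ₗ[ℝ] EE n) =
      Matrix.diagonal fun i => deriv (fun s => Rf (s / δ)) (y i) := by
    ext i j
    rw [LinearMap.toMatrix'_apply]
    have h1 : HasFDerivAt (fun y => Psi δ y i) ((ContinuousLinearMap.proj i).comp (fderiv ℝ (Psi δ) y)) y :=
      (hasFDerivAt_pi'.1 hd.hasFDerivAt) i
    have h3 : HasDerivAt (fun s => Rf (s / δ)) (deriv (fun s => Rf (s / δ)) (y i)) (y i) :=
      (hC.differentiable (by norm_num) _).hasDerivAt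
    have h2 : HasFDerivAt (fun y => Psi δ y i) (deriv (fun s => Rf (s / δ)) (y i) • (ContinuousLinearMap.proj i : EE n →L[ℝ] ℝ)) y :=
      h3.comp_hasFDerivAt y (f := fun y : EE n => y i) (ContinuousLinearMap.proj i : EE n →L[ℝ] ℝ).hasFDerivAt
    have := congrArg (fun L : EE n →L[ℝ] ℝ => L (Pi.single j 1)) (h1.unique h2)
    simp only [ContinuousLinearMap.comp_apply, ContinuousLinearMap.proj_apply, smul_apply, smul_eq_mul] at this
    rw [Matrix.diagonal_apply]
    refine Eq.trans this ?_
    by_cases hij : i = j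
    · subst hij; simp
    · simp [hij]
  rw [this, Matrix.det_diagonal]

lemma int_Psi {δ : ℝ} (hδ : 0 < δ) : ∫ y : EE n, (fderiv ℝ (Psi δ) y).det = 1 := by
  simp_rw [det_Psi]
  rw [integral_fintype_prod_volume_eq_prod (fun (_ : Fin n) s => deriv (fun s => Rf (s / δ)) s)]
  simp [int_step hδ]

/-- contribution of a neighbourhood where `q` is injective -/
lemma II_local {q : EE n → EE n} (hq : ContDiff ℝ 1 q) {δ : ℝ} (hδ : 0 < δ) {N : Set (EE n)}
    (hN : IsOpen N) (hinj : InjOn q N) {σ : ℝ} (hσ : ∀ x ∈ N, (fderiv ℝ q x).det = σ * |(fderiv ℝ q x).det|)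
    (hb : closedBall 0 δ ⊆ q '' N) : II δ q N = σ := by
  have hd : ∀ x, DifferentiableAt ℝ q x := fun x => hq.differentiable (by norm_num) x
  have hP : ∀ x, DifferentiableAt ℝ (Psi δ : EE n → EE n) x := fun x =>
    (Psi_contDiff δ).differentiable (by norm_num) x
  have h1 : II δ q N = σ * ∫ x in N, |(fderiv ℝ q x).det| • (fderiv ℝ (Psi δ) (q x)).det := by
    rw [II, ← integral_const_mul]
    refine setIntegral_congr_fun hN.measurableSet fun x hx => ?_
    have : fderiv ℝ (fun x => Psi δ (q x)) x = (fderiv ℝ (Psi δ) (q x)).comp (fderiv ℝ q x) :=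
      fderiv_comp x (hP _) (hd x)
    simp only [this, smul_eq_mul]
    have e : ((fderiv ℝ (Psi δ) (q x)).comp (fderiv ℝ q x)).det
        = (fderiv ℝ (Psi δ) (q x)).det * (fderiv ℝ q x).det := LinearMap.det_comp _ _
    rw [e, hσ x hx]
    have := hσ x hx
    simp only [abs_mul, abs_abs]
    rw [← abs_abs (fderiv ℝ q x).det, ← abs_mul, ← hσ x hx]
    ring_nf
    rw [abs_abs]
  rw [h1, ← integral_image_eq_integral_abs_det_fderiv_smul volume hN.measurableSet
    (fun x _ => (hd x).hasFDerivAt.hasFDerivWithinAt) hinj (fun y => (fderiv ℝ (Psi δ) y).det),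
    setIntegral_eq_integral_of_forall_compl_eq_zero, int_Psi hδ, mul_one]
  intro y hy
  refine det_Psi_zero (q := id) contDiff_id hδ ?_
  by_contra h
  exact hy (hb (by simpa using h))

end Newm
end

section
open Set Filter Topology MeasureTheory Metric

namespace Newm
variable {n : ℕ}

lemma II_excise {q : EE n → EE n} (hq : ContDiff ℝ 1 q) {δ : ℝ} (hδ : 0 < δ) {N V : Set (EE n)}
    (hV : MeasurableSet V) (hN : N ⊆ V) (h : ∀ x ∈ V \ N, δ < ‖q x‖) : II δ q V = II δ q N :=
  setIntegral_eq_of_subset_of_forall_sdiff_eq_zero hV hN fun x hx => det_Psi_zero hq hδ (h x hx)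

lemma low_bd {C : Set (EE n)} (hC : IsCompact C) {F : EE n → EE n} (hF : ContinuousOn F C)
    (h0 : ∀ x ∈ C, F x ≠ 0) : ∃ c > 0, ∀ x ∈ C, c < ‖F x‖ := by
  rcases C.eq_empty_or_nonempty with rfl | hne
  · exact ⟨1, one_pos, by simp⟩
  obtain ⟨x, hx, hm⟩ := hC.exists_isMinOn hne hF.norm
  have : 0 < ‖F x‖ := norm_pos_iff.2 (h0 x hx)
  refine ⟨‖F x‖ / 2, by linarith, fun y hy => ?_⟩
  have := isMinOn_iff.1 hm y hy
  linarith

lemma II_local_pt {q : EE n → EE n} (hq : ContDiff ℝ 1 q) {x : EE n} (hx : q x = 0)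
    (hd : (fderiv ℝ q x).det ≠ 0) {U : Set (EE n)} (hU : U ∈ 𝓝 x) :
    ∃ N : Set (EE n), IsOpen N ∧ x ∈ N ∧ N ⊆ U ∧ (∀ y ∈ N, q y = 0 → y = x) ∧
      ∃ σ : ℤ, ∀ᶠ δ in 𝓝[>] (0:ℝ), II δ q N = σ := by
  let e := ContinuousLinearMap.toContinuousLinearEquivOfDetNeZero (fderiv ℝ q x) hd
  have hs : HasStrictFDerivAt q (e : EE n →L[ℝ] EE n) x := by
    have := hq.contDiffAt.hasStrictFDerivAt (x := x) (by norm_num)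
    exact this
  let Φ := hs.toOpenPartialHomeomorph q
  have hΦ : (Φ : EE n → EE n) = q := rfl
  have hxs : x ∈ Φ.source := hs.mem_toOpenPartialHomeomorph_source
  set D : EE n → ℝ := fun y => (fderiv ℝ q y).det with hD
  have hDc : Continuous D := cont_det (hq.continuous_fderiv (by norm_num))
  let N := Φ.source ∩ interior U ∩ {y | 0 < D x * D y}
  have hNo : IsOpen N := (Φ.open_source.inter isOpen_interior).inter
    (isOpen_lt continuous_const (continuous_const.mul hDc))
  have hxN : x ∈ N := ⟨⟨hxs, mem_interior_iff_mem_nhds.2 hU⟩, mul_self_pos.2 hd⟩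
  have hinj : InjOn q N := Φ.injOn.mono fun y hy => hy.1.1
  refine ⟨N, hNo, hxN, fun y hy => interior_subset hy.1.2, fun y hy h => hinj hy hxN (by rw [h, hx]), ?_⟩
  have him : q '' N ∈ 𝓝 (0 : EE n) := by
    have : IsOpen (Φ '' N) := Φ.isOpen_image_of_subset_source hNo fun y hy => hy.1.1
    exact this.mem_nhds ⟨x, hxN, hx⟩
  obtain ⟨r, hr, hrs⟩ := Metric.nhds_basis_closedBall.mem_iff.1 him
  have key : ∀ σ : ℝ, (∀ y ∈ N, D y = σ * |D y|) → ∀ᶠ δ in 𝓝[>] (0:ℝ), II δ q N = σ := by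
    intro σ hσ
    filter_upwards [Ioc_mem_nhdsGT hr] with δ hδ
    exact II_local hq hδ.1 hNo hinj hσ ((closedBall_subset_closedBall hδ.2).trans hrs)
  rcases lt_or_gt_of_ne hd with h | h
  · refine ⟨-1, ?_⟩
    push_cast
    refine key _ fun y hy => ?_
    have h2 : 0 < D x * D y := hy.2
    rw [abs_of_neg (by nlinarith [show D x < 0 from h])]; ring
  · refine ⟨1, ?_⟩
    push_cast
    refine key _ fun y hy => ?_
    have h2 : 0 < D x * D y := hy.2
    rw [abs_of_pos (by nlinarith [show D x > 0 from h])]; ring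

lemma II_regular {q : EE n → EE n} (hq : ContDiff ℝ 1 q) {V : Set (EE n)} (hV : IsOpen V)
    (hVb : Bornology.IsBounded V) (hf : ∀ x ∈ frontier V, q x ≠ 0)
    (hreg : ∀ x, q x = 0 → (fderiv ℝ q x).det ≠ 0) :
    ∃ m : ℤ, ∀ᶠ δ in 𝓝[>] (0:ℝ), II δ q V = m := by
  classical
  set Z := closure V ∩ {x | q x = 0} with hZ
  have hZc : IsCompact Z := hVb.isCompact_closure.inter_right
    (isClosed_eq hq.continuous continuous_const)
  have hZV : Z ⊆ V := by
    rintro x ⟨hx, hx2⟩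
    by_contra hxV
    exact hf x (by rw [hV.frontier_eq]; exact ⟨hx, hxV⟩) hx2
  have hfin : Z.Finite := by
    have h1 : ∀ x ∈ Z, ∃ N : Set (EE n), N ∈ 𝓝 x ∧ (∀ y ∈ N, q y = 0 → y = x) := by
      intro x hx
      obtain ⟨N, h1, h2, -, h3, -⟩ := II_local_pt hq hx.2 (hreg x hx.2) univ_mem
      exact ⟨N, h1.mem_nhds h2, h3⟩
    choose! N hN hN2 using h1
    obtain ⟨t, htZ, ht⟩ := hZc.elim_nhds_subcover N hN
    refine t.finite_toSet.subset fun y hy => ?_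
    obtain ⟨x, hx, hyx⟩ := mem_iUnion₂.1 (ht hy)
    rw [hN2 x (htZ x hx) y hyx hy.2]
    exact hx
  obtain ⟨U, hU, hUd⟩ := hfin.t2_separation
  have h1 : ∀ x ∈ Z, ∃ N : Set (EE n), IsOpen N ∧ x ∈ N ∧ N ⊆ U x ∩ V ∧
      ∃ σ : ℤ, ∀ᶠ δ in 𝓝[>] (0:ℝ), II δ q N = σ := by
    intro x hx
    obtain ⟨N, h1, h2, h3, -, h4⟩ := II_local_pt hq hx.2 (hreg x hx.2)
      (inter_mem ((hU x).2.mem_nhds (hU x).1) (hV.mem_nhds (hZV hx)))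
    exact ⟨N, h1, h2, h3, h4⟩
  choose! N hNo hxN hNU σ hσ using h1
  set t := hfin.toFinset with ht
  have htZ : ∀ x, x ∈ t ↔ x ∈ Z := fun x => hfin.mem_toFinset
  refine ⟨∑ x ∈ t, σ x, ?_⟩
  have hB : IsOpen (⋃ x ∈ t, N x) := isOpen_biUnion fun x hx => hNo x ((htZ x).1 hx)
  obtain ⟨c, hc, hcb⟩ := low_bd (hVb.isCompact_closure.diff hB) hq.continuous.continuousOn (by
    rintro x ⟨hx, hx2⟩ h0
    exact hx2 (mem_iUnion₂.2 ⟨x, (htZ x).2 ⟨hx, h0⟩, hxN x ⟨hx, h0⟩⟩))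
  have hev : ∀ᶠ δ in 𝓝[>] (0:ℝ), ∀ x ∈ t, II δ q (N x) = σ x :=
    (Filter.eventually_all_finset t).2 fun x hx => hσ x ((htZ x).1 hx)
  filter_upwards [hev, Ioo_mem_nhdsGT hc] with δ h2 h3
  rw [II_excise (N := ⋃ x ∈ t, N x) hq h3.1 hV.measurableSet
    (iUnion₂_subset fun x hx => (hNU x ((htZ x).1 hx)).trans inter_subset_right)
    (fun x hx => h3.2.trans (hcb x ⟨subset_closure hx.1, hx.2⟩))]
  rw [II, integral_biUnion_finset]
  · push_cast
    exact Finset.sum_congr rfl h2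
  · exact fun x hx => (hNo x ((htZ x).1 hx)).measurableSet
  · intro x hx y hy hxy
    exact (hUd ((htZ x).1 hx) ((htZ y).1 hy) hxy).mono ((hNU x ((htZ x).1 hx)).trans inter_subset_left)
      ((hNU y ((htZ y).1 hy)).trans inter_subset_left)
  · intro x hx
    exact intOn_det ((Psi_contDiff δ).comp hq) (hVb.subset ((hNU x ((htZ x).1 hx)).trans inter_subset_right))

lemma II_int {q : EE n → EE n} (hq : ContDiff ℝ 1 q) {V : Set (EE n)} (hV : IsOpen V)
    (hVb : Bornology.IsBounded V) {δ : ℝ} (hδ : 0 < δ) (hf : ∀ x ∈ frontier V, 2 * δ < ‖q x‖) :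
    ∃ m : ℤ, II δ q V = m := by
  have hsard : volume (q '' {x | (fderiv ℝ q x).det = 0}) = 0 :=
    addHaar_image_eq_zero_of_det_fderivWithin_eq_zero volume
      (f' := fun x => fderiv ℝ q x)
      (fun x _ => (hq.differentiable (by norm_num) x).hasFDerivAt.hasFDerivWithinAt) (fun x hx => hx)
  have hex : ∃ v ∈ ball (0 : EE n) δ, v ∉ q '' {x | (fderiv ℝ q x).det = 0} := by
    by_contra h
    push Not at h
    have : volume (ball (0 : EE n) δ) = 0 := measure_mono_null h hsard
    exact (measure_ball_pos volume (0 : EE n) hδ).ne' this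
  obtain ⟨v, hv, hvr⟩ := hex
  have hv' : ‖v‖ < δ := by simpa using hv
  have hq' : ContDiff ℝ 1 (fun x => q x - v) := hq.sub contDiff_const
  obtain ⟨m, hm⟩ := II_regular hq' hV hVb (by
    intro x hx h0
    have : q x = v := sub_eq_zero.1 h0
    have h2 := hf x hx
    rw [this] at h2; linarith) (by
    intro x hx h0
    refine hvr ⟨x, ?_, sub_eq_zero.1 hx⟩
    have : fderiv ℝ (fun x => q x - v) x = fderiv ℝ q x := fderiv_sub_const (f := q) v
    rw [this] at h0; exact h0)
  obtain ⟨δ', h1, h2⟩ := (hm.and (Ioc_mem_nhdsGT hδ)).exists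
  refine ⟨m, ?_⟩
  rw [← h1]
  exact II_eq hq hq' hV hVb hδ h2.1 le_rfl h2.2 hδ (fun x _ => by simpa using hv') (fun x hx => by
    have := hf x hx; linarith)

end Newm
end

section
open Set Filter Topology MeasureTheory Metric

namespace Newm
variable {n : ℕ}

/-- admissible pairs -/
structure Adm (F : EE n → EE n) (V : Set (EE n)) : Prop where
  op : IsOpen V
  bd : Bornology.IsBounded V
  co : ContinuousOn F (closure V)
  nz : ∀ x ∈ frontier V, F x ≠ 0

/-- defining property of the degree -/
def HasDeg (F : EE n → EE n) (V : Set (EE n)) (m : ℤ) : Prop :=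
  ∃ r > 0, ∀ q, ContDiff ℝ 1 q → ∀ δ ∈ Ioo 0 r, (∀ x ∈ closure V, ‖q x - F x‖ < r) → II δ q V = m

lemma exists_approx {F : EE n → EE n} {K : Set (EE n)} (hK : IsCompact K) (hF : ContinuousOn F K)
    {r : ℝ} (hr : 0 < r) : ∃ q, ContDiff ℝ 1 q ∧ ∀ x ∈ K, ‖q x - F x‖ < r := by
  obtain ⟨g, hg⟩ := ContinuousMap.exists_restrict_eq hK.isClosed (⟨K.domRestrict F, hF.domRestrict⟩ : C(K, EE n))
  obtain ⟨q, hq, hqr, -⟩ := g.continuous.exists_contDiff_approx (1 : ℕ∞) (ε := fun _ => r)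
    continuous_const (fun _ => hr)
  refine ⟨q, by exact_mod_cast hq, fun x hx => ?_⟩
  have h1 : g x = F x := congrArg (fun f : C(K, EE n) => f ⟨x, hx⟩) hg
  rw [← h1, ← dist_eq_norm]
  exact hqr x

lemma Adm.low {F : EE n → EE n} {V : Set (EE n)} (h : Adm F V) :
    ∃ c > 0, ∀ x ∈ frontier V, c < ‖F x‖ :=
  low_bd (h.bd.isCompact_closure.of_isClosed_subset isClosed_frontier frontier_subset_closure)
    (h.co.mono frontier_subset_closure) h.nz

lemma Adm.exists_deg {F : EE n → EE n} {V : Set (EE n)} (h : Adm F V) : ∃ m, HasDeg F V m := by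
  obtain ⟨c, hc, hcb⟩ := h.low
  obtain ⟨q0, hq0, hq0r⟩ := exists_approx h.bd.isCompact_closure h.co (r := c / 8) (by linarith)
  have hlow : ∀ x ∈ frontier V, 7 * (c / 8) < ‖q0 x‖ := by
    intro x hx
    have h1 := hcb x hx
    have h2 := hq0r x (frontier_subset_closure hx)
    have h3 : ‖F x‖ ≤ ‖q0 x‖ + ‖q0 x - F x‖ := by
      have := norm_sub_le (q0 x) (q0 x - F x)
      simpa using this
    linarith
  obtain ⟨m, hm⟩ := II_int hq0 h.op h.bd (δ := c / 8) (by linarith) (fun x hx => by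
    have := hlow x hx; linarith)
  refine ⟨m, c / 8, by linarith, fun q hq δ hδ hqF => ?_⟩
  rw [← hm]
  symm
  refine II_eq hq0 hq h.op h.bd (δ := c / 8) (r := 2 * (c / 8)) (by linarith) hδ.1 le_rfl hδ.2.le (by linarith)
    (fun x hx => ?_) (fun x hx => by have := hlow x hx; linarith)
  have h1 := hqF x hx
  have h2 := hq0r x hx
  have h3 : ‖q x - q0 x‖ ≤ ‖q x - F x‖ + ‖q0 x - F x‖ := by
    have := norm_sub_le (q x - F x) (q0 x - F x)
    simpa using this
  linarith

lemma HasDeg.unique {F : EE n → EE n} {V : Set (EE n)} (h : Adm F V) {m m' : ℤ}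
    (h1 : HasDeg F V m) (h2 : HasDeg F V m') : m = m' := by
  obtain ⟨r, hr, hr'⟩ := h1
  obtain ⟨s, hs, hs'⟩ := h2
  have ht : 0 < min r s := lt_min hr hs
  obtain ⟨q, hq, hqr⟩ := exists_approx h.bd.isCompact_closure h.co ht
  have e1 := hr' q hq (min r s / 2) ⟨by linarith, by linarith [min_le_left r s]⟩
    (fun x hx => (hqr x hx).trans_le (min_le_left _ _))
  have e2 := hs' q hq (min r s / 2) ⟨by linarith, by linarith [min_le_right r s]⟩
    (fun x hx => (hqr x hx).trans_le (min_le_right _ _))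
  exact_mod_cast e1.symm.trans e2

open Classical in
/-- the degree -/
noncomputable def deg (F : EE n → EE n) (V : Set (EE n)) : ℤ :=
  if h : ∃ m, HasDeg F V m then h.choose else 0

lemma Adm.hasDeg {F : EE n → EE n} {V : Set (EE n)} (h : Adm F V) : HasDeg F V (deg F V) := by
  have := h.exists_deg
  rw [deg, dif_pos this]
  exact this.choose_spec

lemma Adm.deg_eq {F : EE n → EE n} {V : Set (EE n)} (h : Adm F V) {m : ℤ} (hm : HasDeg F V m) :
    deg F V = m := h.hasDeg.unique h hm

lemma Adm.stable {F : EE n → EE n} {V : Set (EE n)} (h : Adm F V) :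
    ∃ r > 0, ∀ G : EE n → EE n, ContinuousOn G (closure V) → (∀ x ∈ closure V, ‖G x - F x‖ < r) →
      Adm G V ∧ deg G V = deg F V := by
  obtain ⟨c, hc, hcb⟩ := h.low
  obtain ⟨r, hr, hr'⟩ := h.hasDeg
  refine ⟨min c (r / 2), lt_min hc (by linarith), fun G hG hGF => ?_⟩
  have hA : Adm G V := by
    refine ⟨h.op, h.bd, hG, fun x hx h0 => ?_⟩
    have h1 := hGF x (frontier_subset_closure hx)
    rw [h0, zero_sub, norm_neg] at h1
    exact absurd (h1.trans_le (min_le_left _ _)) (not_lt.2 (hcb x hx).le)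
  refine ⟨hA, hA.deg_eq ⟨r / 2, by linarith, fun q hq δ hδ hqG => ?_⟩⟩
  refine hr' q hq δ ⟨hδ.1, by linarith [hδ.2]⟩ fun x hx => ?_
  have h1 := hqG x hx
  have h2 := (hGF x hx).trans_le (min_le_right _ _)
  have h3 : ‖q x - F x‖ ≤ ‖q x - G x‖ + ‖G x - F x‖ := by
    have := norm_add_le (q x - G x) (G x - F x)
    simpa using this
  linarith

lemma Adm.congr {F G : EE n → EE n} {V : Set (EE n)} (h : Adm F V) (hFG : EqOn G F (closure V)) :
    Adm G V ∧ deg G V = deg F V := by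
  obtain ⟨r, hr, hr'⟩ := h.stable
  exact hr' G (h.co.congr hFG) fun x hx => by simpa [hFG hx] using hr

lemma Adm.mem_of_zero {F : EE n → EE n} {V : Set (EE n)} (h : Adm F V) {x : EE n}
    (hx : x ∈ closure V) (h0 : F x = 0) : x ∈ V := by
  by_contra hxV
  exact h.nz x (by rw [h.op.frontier_eq]; exact ⟨hx, hxV⟩) h0

lemma Adm.left {F : EE n → EE n} {V V1 V2 : Set (EE n)} (h : Adm F V) (h1 : IsOpen V1)
    (h2 : IsOpen V2) (hs1 : V1 ⊆ V) (hd : Disjoint V1 V2)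
    (hz : ∀ x ∈ V, F x = 0 → x ∈ V1 ∪ V2) : Adm F V1 := by
  refine ⟨h1, h.bd.subset hs1, h.co.mono (closure_mono hs1), fun x hx h0 => ?_⟩
  have hxV := h.mem_of_zero (closure_mono hs1 (frontier_subset_closure hx)) h0
  rw [h1.frontier_eq] at hx
  rcases hz x hxV h0 with h3 | h3
  · exact hx.2 h3
  · exact ((hd.closure_left h2).le_bot ⟨hx.1, h3⟩).elim

lemma Adm.add {F : EE n → EE n} {V V1 V2 : Set (EE n)} (h : Adm F V) (h1 : IsOpen V1)
    (h2 : IsOpen V2) (hs1 : V1 ⊆ V) (hs2 : V2 ⊆ V) (hd : Disjoint V1 V2)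
    (hz : ∀ x ∈ V, F x = 0 → x ∈ V1 ∪ V2) : deg F V = deg F V1 + deg F V2 := by
  have hA1 := h.left h1 h2 hs1 hd hz
  have hA2 := h.left h2 h1 hs2 hd.symm (fun x hx h0 => by rw [union_comm]; exact hz x hx h0)
  obtain ⟨r0, hr0, H0⟩ := h.hasDeg
  obtain ⟨r1, hr1, H1⟩ := hA1.hasDeg
  obtain ⟨r2, hr2, H2⟩ := hA2.hasDeg
  obtain ⟨c, hc, hcb⟩ := low_bd (h.bd.isCompact_closure.diff (h1.union h2))
    (h.co.mono sdiff_subset) (by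
      rintro x ⟨hx, hx2⟩ h0
      exact hx2 (hz x (h.mem_of_zero hx h0) h0))
  set r := min (min r0 r1) (min r2 (c / 2)) with hr
  have hrp : 0 < r := by simp only [hr, lt_min_iff]; exact ⟨⟨hr0, hr1⟩, hr2, by linarith⟩
  have l0 : r ≤ r0 := (min_le_left _ _).trans (min_le_left _ _)
  have l1 : r ≤ r1 := (min_le_left _ _).trans (min_le_right _ _)
  have l2 : r ≤ r2 := (min_le_right _ _).trans (min_le_left _ _)
  have l3 : r ≤ c / 2 := (min_le_right _ _).trans (min_le_right _ _)
  obtain ⟨q, hq, hqr⟩ := exists_approx h.bd.isCompact_closure h.co hrp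
  have e0 := H0 q hq (r / 2) ⟨by linarith, by linarith⟩ (fun x hx => (hqr x hx).trans_le l0)
  have e1 := H1 q hq (r / 2) ⟨by linarith, by linarith⟩
    (fun x hx => (hqr x (closure_mono hs1 hx)).trans_le l1)
  have e2 := H2 q hq (r / 2) ⟨by linarith, by linarith⟩
    (fun x hx => (hqr x (closure_mono hs2 hx)).trans_le l2)
  have e3 : II (r / 2) q V = II (r / 2) q V1 + II (r / 2) q V2 := by
    rw [II_excise hq (by linarith) h.op.measurableSet (union_subset hs1 hs2)]
    · rw [II, setIntegral_union hd h2.measurableSet]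
      · rfl
      · exact intOn_det ((Psi_contDiff _).comp hq) hA1.bd
      · exact intOn_det ((Psi_contDiff _).comp hq) hA2.bd
    · rintro x ⟨hx, hx2⟩
      have h1 := hcb x ⟨subset_closure hx, hx2⟩
      have h2 := hqr x (subset_closure hx)
      have h3 : ‖F x‖ ≤ ‖q x‖ + ‖q x - F x‖ := by
        have := norm_sub_le (q x) (q x - F x)
        simpa using this
      linarith
  rw [e0, e1, e2] at e3
  exact_mod_cast e3

lemma adm_empty (F : EE n → EE n) : Adm F ∅ := ⟨isOpen_empty, by simp, by simp, by simp⟩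

lemma deg_empty (F : EE n → EE n) : deg F ∅ = 0 := by
  have := (adm_empty F).add isOpen_empty isOpen_empty (empty_subset _) (empty_subset _) (by simp) (by simp)
  linarith

lemma Adm.excise {F : EE n → EE n} {V N : Set (EE n)} (h : Adm F V) (hN : IsOpen N) (hs : N ⊆ V)
    (hz : ∀ x ∈ V, F x = 0 → x ∈ N) : Adm F N ∧ deg F V = deg F N := by
  have hz' : ∀ x ∈ V, F x = 0 → x ∈ N ∪ ∅ := by simpa using hz
  refine ⟨h.left hN isOpen_empty hs (by simp) hz', ?_⟩
  rw [h.add hN isOpen_empty hs (empty_subset _) (by simp) hz', deg_empty, add_zero]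

lemma Adm.deg_zero {F : EE n → EE n} {V : Set (EE n)} (h : Adm F V) (hz : ∀ x ∈ V, F x ≠ 0) :
    deg F V = 0 := by
  rw [(h.excise isOpen_empty (empty_subset _) (fun x hx h0 => (hz x hx h0).elim)).2, deg_empty]

lemma deg_sum {F : EE n → EE n} {P : ℕ → Set (EE n)} (k : ℕ) (hA : ∀ i < k, Adm F (P i))
    (hd : ∀ i < k, ∀ j < k, i ≠ j → Disjoint (P i) (P j)) :
    Adm F (⋃ i < k, P i) ∧ deg F (⋃ i < k, P i) = ∑ i ∈ Finset.range k, deg F (P i) := by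
  induction k with
  | zero => simpa [deg_empty] using adm_empty F
  | succ k ih =>
    obtain ⟨h1, h2⟩ := ih (fun i hi => hA i (by omega)) (fun i hi j hj => hd i (by omega) j (by omega))
    have e : ⋃ i < k + 1, P i = (⋃ i < k, P i) ∪ P k := by
      simpa using biUnion_lt_succ P k
    have hk := hA k (by omega)
    have hadm : Adm F ((⋃ i < k, P i) ∪ P k) := by
      refine ⟨h1.op.union hk.op, h1.bd.union hk.bd, ?_, fun x hx h0 => ?_⟩
      · rw [closure_union]
        exact h1.co.union_of_isClosed hk.co isClosed_closure isClosed_closure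
      · rcases frontier_union_subset _ _ hx with h | h
        · exact h1.nz x h.1 h0
        · exact hk.nz x h.2 h0
    rw [e]
    refine ⟨hadm, ?_⟩
    rw [hadm.add h1.op hk.op subset_union_left subset_union_right ?_ (fun x hx _ => hx), h2,
      Finset.sum_range_succ]
    rw [disjoint_iUnion₂_left]
    exact fun i hi => hd i (by omega) k (by omega) (by omega)

lemma deg_id {V : Set (EE n)} (hV : IsOpen V) (hb : Bornology.IsBounded V) {c : EE n} (hc : c ∈ V) :
    Adm (fun x => x - c) V ∧ deg (fun x => x - c) V = 1 := by
  have hA : Adm (fun x => x - c) V := by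
    refine ⟨hV, hb, by fun_prop, fun x hx h0 => ?_⟩
    have : x = c := sub_eq_zero.1 h0
    rw [hV.frontier_eq] at hx
    exact hx.2 (this ▸ hc)
  refine ⟨hA, ?_⟩
  obtain ⟨r, hr, H⟩ := hA.hasDeg
  obtain ⟨ρ, hρ, hρV⟩ := Metric.isOpen_iff.1 hV c hc
  have hm : 0 < min r ρ := lt_min hr hρ
  have hq : ContDiff ℝ 1 (fun x : EE n => x - c) := contDiff_id.sub contDiff_const
  have e := H _ hq (min r ρ / 2) ⟨by linarith, by linarith [min_le_left r ρ]⟩ (fun x _ => by simpa using hr)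
  have e2 : II (min r ρ / 2) (fun x : EE n => x - c) V = 1 := by
    refine II_local hq (by linarith) hV (fun x _ y _ h => by simpa using h) ?_ ?_
    · intro x hx
      have : fderiv ℝ (fun x : EE n => x - c) x = ContinuousLinearMap.id ℝ _ := by
        rw [fderiv_sub_const c]; exact fderiv_id
      rw [this]
      have : (ContinuousLinearMap.id ℝ (EE n)).det = 1 := LinearMap.det_id
      rw [this]; norm_num
    · intro y hy
      refine ⟨y + c, hρV ?_, by simp⟩
      have : ‖y‖ ≤ min r ρ / 2 := by simpa using hy
      simp only [mem_ball, dist_eq_norm, add_sub_cancel_right]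
      linarith [min_le_right r ρ]
  rw [e2] at e
  exact_mod_cast e.symm

lemma const_of_local {d : ℝ → ℤ} {a b : ℝ} (hab : a ≤ b)
    (h : ∀ s ∈ Icc a b, ∃ u : Set ℝ, IsOpen u ∧ s ∈ u ∧ ∀ s' ∈ u ∩ Icc a b, d s' = d s) : d a = d b := by
  refine isPreconnected_Icc.constant (s := Icc a b) (f := d) ?_ (left_mem_Icc.2 hab) (right_mem_Icc.2 hab)
  intro s hs
  obtain ⟨u, hu, hsu, H⟩ := h s hs
  have : d =ᶠ[𝓝[Icc a b] s] fun _ => d s := by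
    filter_upwards [mem_nhdsWithin_of_mem_nhds (hu.mem_nhds hsu), self_mem_nhdsWithin] with t h1 h2
    exact H t ⟨h1, h2⟩
  exact (continuousWithinAt_const (b := d s)).congr_of_eventuallyEq this rfl

lemma deg_homotopy {H : ℝ → EE n → EE n} {Q : Set (ℝ × EE n)} {a b : ℝ} (hab : a ≤ b)
    (hQ : IsOpen Q) (hc : ContinuousOn (fun p : ℝ × EE n => H p.1 p.2) Q)
    (hadm : ∀ s ∈ Icc a b, Adm (H s) {y | (s, y) ∈ Q})
    (hZ : IsCompact {p : ℝ × EE n | p ∈ Q ∧ p.1 ∈ Icc a b ∧ H p.1 p.2 = 0}) :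
    deg (H a) {y | (a, y) ∈ Q} = deg (H b) {y | (b, y) ∈ Q} := by
  refine const_of_local (d := fun s => deg (H s) {y | (s, y) ∈ Q}) hab fun s0 hs0 => ?_
  set Z := {p : ℝ × EE n | p ∈ Q ∧ p.1 ∈ Icc a b ∧ H p.1 p.2 = 0} with hZdef
  set Q0 := {y | (s0, y) ∈ Q} with hQ0
  have hA0 := hadm s0 hs0
  have hZ0 : IsCompact (Prod.snd '' (Z ∩ {p | p.1 = s0})) :=
    (hZ.inter_right (isClosed_eq continuous_fst continuous_const)).image continuous_snd
  obtain ⟨N, hNo, hZN, hNQ, hNc⟩ := exists_open_between_and_isCompact_closure hZ0 hA0.op (by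
    rintro y ⟨⟨s, y'⟩, ⟨h1, h2⟩, rfl⟩
    have : s = s0 := h2
    subst this
    exact h1.1)
  obtain ⟨hAN, hdN⟩ := hA0.excise hNo (subset_closure.trans hNQ) (fun y hy h0 =>
    hZN ⟨(s0, y), ⟨⟨hy, hs0, h0⟩, rfl⟩, rfl⟩)
  obtain ⟨r, hr, hst⟩ := hAN.stable
  have hUo : IsOpen ((Q ∩ {p | p.2 ∈ Q0}) ∩ (fun p : ℝ × EE n => ‖H p.1 p.2 - H s0 p.2‖) ⁻¹' Iio r) := by
    have ho : IsOpen (Q ∩ {p : ℝ × EE n | p.2 ∈ Q0}) := hQ.inter (hA0.op.preimage continuous_snd)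
    refine ContinuousOn.isOpen_inter_preimage ?_ ho isOpen_Iio
    refine ((hc.mono inter_subset_left).sub ?_).norm
    exact hc.comp (f := fun p : ℝ × EE n => (s0, p.2)) (by fun_prop) fun p hp => hp.2
  obtain ⟨u, v, hu, hv, hsu, hNv, huv⟩ := generalized_tube_lemma (isCompact_singleton (x := s0)) hNc hUo (by
    rintro ⟨s, y⟩ ⟨hs, hy⟩
    have : s = s0 := hs
    subst this
    exact ⟨⟨hNQ hy, hNQ hy⟩, by simpa using hr⟩)
  have hC : IsCompact (Prod.fst '' (Z ∩ {p | p.2 ∈ Nᶜ})) :=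
    (hZ.inter_right (hNo.isClosed_compl.preimage continuous_snd)).image continuous_fst
  refine ⟨u ∩ (Prod.fst '' (Z ∩ {p | p.2 ∈ Nᶜ}))ᶜ, hu.inter hC.isClosed.isOpen_compl, ⟨hsu rfl, ?_⟩, ?_⟩
  · rintro ⟨⟨s, y⟩, ⟨h1, h2⟩, h3⟩
    exact h2 (hZN ⟨(s, y), ⟨h1, h3⟩, rfl⟩)
  · rintro s ⟨⟨hs1, hs2⟩, hs3⟩
    have hNs : ∀ y ∈ closure N, (s, y) ∈ Q ∧ ‖H s y - H s0 y‖ < r := fun y hy =>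
      ⟨(huv (⟨hs1, hNv hy⟩ : (s, y) ∈ u ×ˢ v)).1.1, (huv (⟨hs1, hNv hy⟩ : (s, y) ∈ u ×ˢ v)).2⟩
    obtain ⟨-, h2⟩ := hst (H s) (hc.comp (f := fun y : EE n => (s, y)) (by fun_prop) fun y hy => (hNs y hy).1)
      (fun y hy => (hNs y hy).2)
    have h3 := ((hadm s hs3).excise hNo (fun y hy => (hNs y (subset_closure hy)).1) (fun y hy h0 => by
      by_contra hyN
      exact hs2 ⟨(s, y), ⟨⟨hy, hs3, h0⟩, hyN⟩, rfl⟩)).2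
    show deg (H s) {y | (s, y) ∈ Q} = deg (H s0) Q0
    rw [h3, h2, hdN]

end Newm
end

section
open Set Filter Topology MeasureTheory Metric

namespace Newm
variable {n : ℕ}

lemma deg_shrink1 {W P : Set (EE n)} (hW : IsOpen W) {g g' : EE n → EE n} {z : EE n} {ε R : ℝ}
    (hε : 0 < ε) (hεR : ε < R) (hgc : ContinuousOn g W) (hgc' : ContinuousOn g' W)
    (hgm : MapsTo g W W) (hgm' : MapsTo g' W W) (hl : ∀ y ∈ W, g' (g y) = y)
    (hr : ∀ y ∈ W, g (g' y) = y) (hid : ∀ y ∈ closedBall z ε, g y = y)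
    (hRW : closedBall z R ⊆ W) (hPR : closure P ⊆ ball z R) {F : EE n → EE n} (hA : Adm F P) :
    Adm (fun y => F (g y)) (W ∩ g ⁻¹' P) ∧ deg (fun y => F (g y)) (W ∩ g ⁻¹' P) =
      deg (fun y => F (z + (ε / R)⁻¹ • (y - z))) {y | z + (ε / R)⁻¹ • (y - z) ∈ P} := by
  have hR : 0 < R := hε.trans hεR
  set a := ε / R with ha
  have ha0 : 0 < a := by positivity
  have ha1 : a ≤ 1 := by rw [ha, div_le_one hR]; exact hεR.le
  set κ : ℝ × EE n → EE n := fun p => z + p.1⁻¹ • (g p.2 - z) with hκ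
  have hκc : ContinuousOn κ (Ioi 0 ×ˢ W) := by
    have h1 : ContinuousOn (fun p : ℝ × EE n => p.1⁻¹) (Ioi 0 ×ˢ W) :=
      ContinuousOn.inv₀ continuous_fst.continuousOn fun p hp => (ne_of_gt hp.1)
    have h2 : ContinuousOn (fun p : ℝ × EE n => g p.2) (Ioi 0 ×ˢ W) :=
      hgc.comp continuous_snd.continuousOn fun p hp => hp.2
    exact continuousOn_const.add (h1.smul (h2.sub continuousOn_const))
  set Q : Set (ℝ × EE n) := (Ioi 0 ×ˢ W) ∩ κ ⁻¹' P with hQ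
  have hQo : IsOpen Q := hκc.isOpen_inter_preimage (isOpen_Ioi.prod hW) hA.op
  have hPc : IsCompact (closure P) := hA.bd.isCompact_closure
  -- the contraction
  have hφ : ∀ s ∈ Ioc (0:ℝ) 1, ∀ x ∈ closure P, z + s • (x - z) ∈ ball z (s * R) := by
    intro s hs x hx
    have := hPR hx
    rw [mem_ball, dist_eq_norm] at this ⊢
    rw [add_sub_cancel_left, norm_smul, Real.norm_eq_abs, abs_of_pos hs.1]
    exact mul_lt_mul_of_pos_left this hs.1
  have hφW : ∀ s ∈ Ioc (0:ℝ) 1, ∀ x ∈ closure P, z + s • (x - z) ∈ W := by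
    intro s hs x hx
    refine hRW (ball_subset_closedBall (ball_subset_ball ?_ (hφ s hs x hx)))
    nlinarith [hs.2]
  have hinv : ∀ s : ℝ, 0 < s → ∀ x : EE n, z + s⁻¹ • ((z + s • (x - z)) - z) = x := by
    intro s hs x
    rw [add_sub_cancel_left, smul_smul, inv_mul_cancel₀ hs.ne', one_smul, add_sub_cancel]
  have hinv' : ∀ s : ℝ, 0 < s → ∀ x : EE n, z + s • ((z + s⁻¹ • (x - z)) - z) = x := by
    intro s hs x
    rw [add_sub_cancel_left, smul_smul, mul_inv_cancel₀ hs.ne', one_smul, add_sub_cancel]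
  have hcl : ∀ s ∈ Ioc (0:ℝ) 1, closure {y | (s, y) ∈ Q} ⊆ (fun x => g' (z + s • (x - z))) '' closure P := by
    intro s hs
    refine closure_minimal ?_ (IsCompact.isClosed (hPc.image_of_continuousOn ?_))
    · rintro y ⟨⟨-, hyW⟩, hyP⟩
      refine ⟨κ (s, y), subset_closure hyP, ?_⟩
      simp only [hκ]
      rw [hinv' s hs.1, hl y hyW]
    · exact hgc'.comp (by fun_prop) fun x hx => hφW s hs x hx
  have hcl2 : ∀ s ∈ Ioc (0:ℝ) 1, ∀ y ∈ closure {y | (s, y) ∈ Q}, y ∈ W ∧ κ (s, y) ∈ closure P ∧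
      g y ∈ ball z (s * R) := by
    intro s hs y hy
    obtain ⟨x, hx, rfl⟩ := hcl s hs hy
    refine ⟨hgm' (hφW s hs x hx), ?_, ?_⟩
    · simp only [hκ]
      rw [hr _ (hφW s hs x hx), hinv s hs.1]
      exact hx
    · rw [hr _ (hφW s hs x hx)]
      exact hφ s hs x hx
  have hadm : ∀ s ∈ Ioc (0:ℝ) 1, Adm (fun y => F (κ (s, y))) {y | (s, y) ∈ Q} := by
    intro s hs
    refine ⟨hQo.preimage (Continuous.prodMk_right s), ?_, ?_, ?_⟩
    · refine (IsCompact.isBounded (hPc.image_of_continuousOn ?_)).subset (subset_closure.trans (hcl s hs))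
      exact hgc'.comp (by fun_prop) fun x hx => hφW s hs x hx
    · refine hA.co.comp (hκc.comp (by fun_prop) fun y hy => ⟨hs.1, (hcl2 s hs y hy).1⟩) fun y hy => (hcl2 s hs y hy).2.1
    · intro y hy
      have hy1 := frontier_subset_closure hy
      have hop : IsOpen {y | (s, y) ∈ Q} := hQo.preimage (Continuous.prodMk_right s)
      rw [hop.frontier_eq] at hy
      refine hA.nz _ ?_
      rw [hA.op.frontier_eq]
      exact ⟨(hcl2 s hs y hy1).2.1, fun h => hy.2 ⟨⟨hs.1, (hcl2 s hs y hy1).1⟩, h⟩⟩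
  have hsub : Icc a 1 ⊆ Ioc (0:ℝ) 1 := fun s hs => ⟨ha0.trans_le hs.1, hs.2⟩
  have hZ0 : IsCompact (closure P ∩ F ⁻¹' {0}) := by
    exact hPc.of_isClosed_subset (hA.co.preimage_isClosed_of_isClosed isClosed_closure isClosed_singleton) inter_subset_left
  have hom := deg_homotopy (H := fun s y => F (κ (s, y))) (Q := Q) ha1 hQo
    (hA.co.comp (hκc.mono inter_subset_left) fun p hp => subset_closure hp.2)
    (fun s hs => hadm s (hsub hs)) (by
      have : {p : ℝ × EE n | p ∈ Q ∧ p.1 ∈ Icc a 1 ∧ F (κ (p.1, p.2)) = 0} =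
          (fun p : ℝ × EE n => (p.1, g' (z + p.1 • (p.2 - z)))) '' (Icc a 1 ×ˢ (closure P ∩ F ⁻¹' {0})) := by
        ext ⟨s, y⟩
        constructor
        · rintro ⟨h1, h2, h3⟩
          refine ⟨(s, κ (s, y)), ⟨h2, subset_closure h1.2, h3⟩, ?_⟩
          simp only [hκ]
          rw [hinv' s (hsub h2).1, hl y h1.1.2]
        · rintro ⟨⟨s', x⟩, ⟨h1, h2, h3⟩, h4⟩
          simp only [Prod.mk.injEq] at h4
          obtain ⟨rfl, rfl⟩ := h4
          have hw := hφW s' (hsub h1) x h2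
          have e : κ (s', g' (z + s' • (x - z))) = x := by
            simp only [hκ]
            rw [hr _ hw, hinv s' (hsub h1).1]
          refine ⟨⟨⟨(hsub h1).1, hgm' hw⟩, ?_⟩, h1, ?_⟩
          · show κ (s', g' (z + s' • (x - z))) ∈ P
            rw [e]; exact hA.mem_of_zero h2 h3
          · show F (κ (s', g' (z + s' • (x - z)))) = 0
            rw [e]; exact h3
      rw [this]
      refine (isCompact_Icc.prod hZ0).image_of_continuousOn ?_
      refine continuous_fst.continuousOn.prodMk (hgc'.comp (by fun_prop) ?_)
      rintro ⟨s, x⟩ ⟨h1, h2, -⟩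
      exact hφW s (hsub h1) x h2)
  have e1 : ∀ y, κ (1, y) = g y := fun y => by simp [hκ]
  have s1 : {y | ((1:ℝ), y) ∈ Q} = W ∩ g ⁻¹' P := by
    ext y
    simp [hQ, e1]
  have hA1 := hadm 1 ⟨one_pos, le_rfl⟩
  simp only [e1, s1] at hom hA1
  refine ⟨hA1, ?_⟩
  rw [← hom]
  have haR : a * R = ε := by rw [ha]; field_simp
  have hAa := hadm a ⟨ha0, ha1⟩
  have hg : ∀ y ∈ W, g y ∈ closedBall z ε → g y = y := by
    intro y hy h
    have h1 := hid _ h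
    calc g y = g' (g (g y)) := (hl _ (hgm hy)).symm
      _ = g' (g y) := by rw [h1]
      _ = y := hl y hy
  have sa : {y | (a, y) ∈ Q} = {y | z + a⁻¹ • (y - z) ∈ P} := by
    ext y
    constructor
    · intro hy
      have h1 := hcl2 a ⟨ha0, ha1⟩ y (subset_closure hy)
      rw [haR] at h1
      have h2 := hg y h1.1 (ball_subset_closedBall h1.2.2)
      have : κ (a, y) ∈ P := hy.2
      simp only [hκ, h2] at this
      exact this
    · intro hy
      have hb : y ∈ ball z (a * R) := by
        have := hφ a ⟨ha0, ha1⟩ _ (subset_closure hy)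
        rwa [hinv' a ha0] at this
      rw [haR] at hb
      have hb' := ball_subset_closedBall hb
      refine ⟨⟨ha0, hRW (closedBall_subset_closedBall hεR.le hb')⟩, ?_⟩
      show z + a⁻¹ • (g y - z) ∈ P
      rw [hid y hb']; exact hy
  rw [← sa]
  refine (hAa.congr fun y hy => ?_).2.symm
  have h1 := hcl2 a ⟨ha0, ha1⟩ y hy
  rw [haR] at h1
  simp only [hκ, hg y h1.1 (ball_subset_closedBall h1.2.2)]

lemma deg_shrink {W P : Set (EE n)} (hW : IsOpen W) {g g' : EE n → EE n} {z : EE n} {ε R : ℝ}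
    (hε : 0 < ε) (hεR : ε < R) (hgc : ContinuousOn g W) (hgc' : ContinuousOn g' W)
    (hgm : MapsTo g W W) (hgm' : MapsTo g' W W) (hl : ∀ y ∈ W, g' (g y) = y)
    (hr : ∀ y ∈ W, g (g' y) = y) (hid : ∀ y ∈ closedBall z ε, g y = y)
    (hRW : closedBall z R ⊆ W) (hPR : closure P ⊆ ball z R) {F : EE n → EE n} (hA : Adm F P) :
    Adm (fun y => F (g y)) (W ∩ g ⁻¹' P) ∧ deg (fun y => F (g y)) (W ∩ g ⁻¹' P) = deg F P := by
  obtain ⟨h1, h2⟩ := deg_shrink1 hW hε hεR hgc hgc' hgm hgm' hl hr hid hRW hPR hA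
  obtain ⟨-, h3⟩ := deg_shrink1 (g := id) (g' := id) hW hε hεR continuousOn_id continuousOn_id
    (mapsTo_id _) (mapsTo_id _) (fun _ _ => rfl) (fun _ _ => rfl) (fun _ _ => rfl) hRW hPR hA
  refine ⟨h1, h2.trans (h3.symm.trans ?_)⟩
  have : W ∩ id ⁻¹' P = P := inter_eq_right.2 ((subset_closure.trans hPR).trans (ball_subset_closedBall.trans hRW))
  rw [this]; rfl

end Newm
end

section
open Set Filter Topology MeasureTheory Metric

namespace Newm
variable {n : ℕ}

/-- local periodic system -/
structure Sys (W : Set (EE n)) (h : EE n → EE n) (p : ℕ) (z : EE n) (ε R : ℝ) : Prop where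
  op : IsOpen W
  co : ContinuousOn h W
  mt : MapsTo h W W
  pp : 0 < p
  per : ∀ y ∈ W, h^[p] y = y
  hε : 0 < ε
  hεR : ε < R
  RW : closedBall z R ⊆ W
  idb : ∀ y ∈ closedBall z ε, h y = y

section
variable {W : Set (EE n)} {h : EE n → EE n} {p : ℕ} {z : EE n} {ε R : ℝ}

lemma Sys.mti (S : Sys W h p z ε R) (i : ℕ) : MapsTo h^[i] W W := S.mt.iterate i

lemma Sys.coi (S : Sys W h p z ε R) (i : ℕ) : ContinuousOn h^[i] W := by
  induction i with
  | zero => exact continuousOn_id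
  | succ i ih =>
    rw [Function.iterate_succ']
    exact S.co.comp ih (S.mti i)

lemma Sys.inv (S : Sys W h p z ε R) {i : ℕ} (hi : i ≤ p) {y : EE n} (hy : y ∈ W) :
    h^[p - i] (h^[i] y) = y := by
  rw [← Function.iterate_add_apply, Nat.sub_add_cancel hi, S.per y hy]

lemma Sys.inv' (S : Sys W h p z ε R) {i : ℕ} (hi : i ≤ p) {y : EE n} (hy : y ∈ W) :
    h^[i] (h^[p - i] y) = y := by
  rw [← Function.iterate_add_apply, Nat.add_sub_cancel' hi, S.per y hy]

lemma Sys.idi (S : Sys W h p z ε R) (i : ℕ) {y : EE n} (hy : y ∈ closedBall z ε) : h^[i] y = y :=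
  Function.iterate_fixed (S.idb y hy) i

lemma Sys.invt (S : Sys W h p z ε R) {X : Type*} {f : EE n → X} (hf : ∀ y ∈ W, f (h y) = f y) (i : ℕ)
    {y : EE n} (hy : y ∈ W) : f (h^[i] y) = f y := by
  induction i with
  | zero => rfl
  | succ i ih => rw [Function.iterate_succ_apply', hf _ (S.mti i hy), ih]

/-- ball with disjoint translates -/
structure GB (h : EE n → EE n) (p : ℕ) (z : EE n) (R : ℝ) (b : EE n × ℝ × ℝ) : Prop where
  p1 : 0 < b.2.1
  p2 : b.2.1 < b.2.2
  sub : closedBall b.1 b.2.2 ⊆ ball z R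
  dj : ∀ x ∈ closedBall b.1 b.2.2, ∀ j, 0 < j → j < p → h^[j] x ∉ closedBall b.1 b.2.2

lemma Sys.perturb (S : Sys W h p z ε R) {b : EE n × ℝ × ℝ} (hb : GB h p z R b) {f : EE n → EE n}
    (hf : ContinuousOn f W) (hfi : ∀ y ∈ W, f (h y) = f y) (v : EE n) {r : ℝ} (hr : 0 < r) :
    ∃ f' : EE n → EE n, ContinuousOn f' W ∧ (∀ y ∈ W, f' (h y) = f' y) ∧
      (∀ y ∈ W, ‖f' y - f y‖ < r) ∧ ∀ y ∈ sphere b.1 b.2.1, f' y ≠ v := by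
  obtain ⟨c, ρ, ρ'⟩ := b
  have p1 : 0 < ρ := hb.p1
  have p2 : ρ < ρ' := hb.p2
  have hsub : closedBall c ρ' ⊆ ball z R := hb.sub
  have hBW : closedBall c ρ' ⊆ W := hsub.trans (ball_subset_closedBall.trans S.RW)
  have hp : (0:ℝ) < p := by exact_mod_cast S.pp
  set t := r / (4 * p) with ht
  have htp : 0 < t := by positivity
  obtain ⟨χ, hχ, -, hχs, hχ1, hχI⟩ := exists_cutoff (isCompact_sphere c ρ) (V := ball c ρ') isOpen_ball
    (sphere_subset_closedBall.trans (closedBall_subset_ball p2))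
  have hχ0 : ∀ x, x ∉ closedBall c ρ' → χ x = 0 := by
    intro x hx
    by_contra h0
    exact hx (ball_subset_closedBall (hχs (subset_tsupport _ h0)))
  obtain ⟨q, hq, hqf⟩ := exists_approx (isCompact_closedBall c ρ') (hf.mono hBW) htp
  have hnull : volume ((fun x => q x - v) '' sphere c ρ) = 0 := by
    refine addHaar_image_eq_zero_of_differentiableOn_of_addHaar_eq_zero volume ?_ (Measure.addHaar_sphere_of_ne_zero _ _ p1.ne')
    exact ((hq.differentiable (by norm_num)).sub_const v).differentiableOn
  have hex : ∃ w ∈ ball (0 : EE n) t, w ∉ (fun x => q x - v) '' sphere c ρ := by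
    by_contra hcon
    push Not at hcon
    have : volume (ball (0 : EE n) t) = 0 := measure_mono_null hcon hnull
    exact (measure_ball_pos volume (0 : EE n) htp).ne' this
  obtain ⟨w, hw, hws⟩ := hex
  have hw' : ‖w‖ < t := by simpa using hw
  set φ : EE n → EE n := fun x => χ x • (q x - w - f x) with hφ
  have hφc : ContinuousOn φ W := hχ.continuous.continuousOn.smul ((hq.continuous.continuousOn.sub continuousOn_const).sub hf)
  have hφb : ∀ x, ‖φ x‖ ≤ 2 * t := by
    intro x
    by_cases hx : x ∈ closedBall c ρ'
    · have h1 : ‖q x - w - f x‖ ≤ ‖q x - f x‖ + ‖w‖ := by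
        have := norm_sub_le (q x - f x) w
        rwa [sub_right_comm] at this
      have h2 := hqf x hx
      rw [hφ]
      simp only [norm_smul, Real.norm_eq_abs, abs_of_nonneg (hχI x).1]
      have h3 := (hχI x).2
      have h4 := (hχI x).1
      have h5 := norm_nonneg (q x - w - f x)
      nlinarith
    · simp only [hφ, hχ0 x hx, zero_smul, norm_zero]; linarith
  refine ⟨fun y => f y + ∑ i ∈ Finset.range p, φ (h^[i] y), ?_, ?_, ?_, ?_⟩
  · exact hf.add (continuousOn_finsetSum _ fun i _ => hφc.comp (S.coi i) (S.mti i))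
  · intro y hy
    simp only [hfi y hy]
    congr 1
    have e1 := Finset.sum_range_succ (fun i => φ (h^[i] y)) p
    have e2 := Finset.sum_range_succ' (fun i => φ (h^[i] y)) p
    rw [e1] at e2
    simp only [S.per y hy, Function.iterate_zero, id, add_left_inj, Function.iterate_succ_apply] at e2
    exact e2.symm
  · intro y hy
    rw [add_sub_cancel_left]
    have : ‖∑ i ∈ Finset.range p, φ (h^[i] y)‖ ≤ ∑ i ∈ Finset.range p, 2 * t :=
      norm_sum_le_of_le _ fun i _ => hφb _
    refine this.trans_lt ?_
    rw [Finset.sum_const, Finset.card_range, nsmul_eq_mul, ht]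
    field_simp
    linarith
  · intro y hy heq
    have hyB : y ∈ closedBall c ρ' := closedBall_subset_closedBall p2.le (sphere_subset_closedBall hy)
    have e : ∑ i ∈ Finset.range p, φ (h^[i] y) = φ y := by
      rw [Finset.sum_eq_single_of_mem 0 (Finset.mem_range.2 S.pp)]
      · rfl
      · intro i hi hi0
        have := hχ0 _ (hb.dj y hyB i (Nat.pos_of_ne_zero hi0) (Finset.mem_range.1 hi))
        simp only [hφ, this, zero_smul]
    have hone : χ y = 1 := (hχ1 y hy).self_of_nhds
    have e2 : φ y = q y - w - f y := by simp only [hφ, hone, one_smul]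
    have heq' : q y - w = v := by
      rw [← heq]
      show q y - w = f y + ∑ i ∈ Finset.range p, φ (h^[i] y)
      rw [e, e2, add_sub_cancel]
    refine hws ⟨y, hy, ?_⟩
    simp only [← heq', sub_sub_cancel]

lemma Sys.isOpen_pre (S : Sys W h p z ε R) (i : ℕ) {T : Set (EE n)} (hT : IsOpen T) :
    IsOpen (W ∩ h^[i] ⁻¹' T) := (S.coi i).isOpen_inter_preimage S.op hT

lemma Sys.div_claim (S : Sys W h p z ε R) (v : EE n) (L : List (EE n × ℝ × ℝ)) :
    (∀ b ∈ L, GB h p z R b) → ∀ (f : EE n → EE n) (Y : Set (EE n)), ContinuousOn f W →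
    (∀ y ∈ W, f (h y) = f y) → IsOpen Y → Bornology.IsBounded Y → closure Y ⊆ W →
    (∀ y ∈ Y, h y ∈ Y) → (∀ y ∈ frontier Y, f y ≠ v) →
    (∀ y ∈ Y, f y = v → ∃ b ∈ L, ∃ i < p, h^[i] y ∈ ball b.1 b.2.1) →
    (p : ℤ) ∣ deg (fun y => f y - v) Y := by
  induction L with
  | nil =>
    intro _ f Y hf hfi hY hYb hYW hYi hfr hz
    have hA : Adm (fun y => f y - v) Y := ⟨hY, hYb, (hf.mono hYW).sub continuousOn_const, fun y hy h0 =>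
      hfr y hy (sub_eq_zero.1 h0)⟩
    rw [hA.deg_zero fun y hy h0 => ?_]
    · exact dvd_zero _
    · obtain ⟨b, hb, -⟩ := hz y hy (sub_eq_zero.1 h0)
      simp at hb
  | cons b L ih =>
    intro hGB f Y hf hfi hY hYb hYW hYi hfr hz
    have hA : Adm (fun y => f y - v) Y := ⟨hY, hYb, (hf.mono hYW).sub continuousOn_const, fun y hy h0 =>
      hfr y hy (sub_eq_zero.1 h0)⟩
    have hb : GB h p z R b := hGB b (by simp)
    -- zeros avoid a compact set
    set 𝒰 : Set (EE n) := {y | y ∈ W ∧ ∃ b' ∈ b :: L, ∃ i < p, h^[i] y ∈ ball b'.1 b'.2.1} with h𝒰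
    have h𝒰o : IsOpen 𝒰 := by
      have : 𝒰 = ⋃ b' ∈ {b' | b' ∈ b :: L}, ⋃ i ∈ {i | i < p}, (W ∩ h^[i] ⁻¹' ball b'.1 b'.2.1) := by
        ext y
        simp only [h𝒰, mem_iUnion, mem_inter_iff, mem_preimage, exists_prop, mem_ofPred_eq]
        constructor
        · rintro ⟨h1, b', hb', i, hi, h2⟩
          exact ⟨b', hb', i, hi, h1, h2⟩
        · rintro ⟨b', hb', i, hi, h1, h2⟩
          exact ⟨h1, b', hb', i, hi, h2⟩
      rw [this]
      exact isOpen_biUnion fun b' _ => isOpen_biUnion fun i _ => S.isOpen_pre i isOpen_ball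
    obtain ⟨c0, hc0, hc0b⟩ := low_bd (hYb.isCompact_closure.diff h𝒰o) (hA.co.mono sdiff_subset) (by
      rintro y ⟨hy, hy2⟩ h0
      have hyY := hA.mem_of_zero hy h0
      exact hy2 ⟨hYW hy, hz y hyY (sub_eq_zero.1 h0)⟩)
    obtain ⟨r, hr, hst⟩ := hA.stable
    obtain ⟨f', hf'c, hf'i, hf'r, hf's⟩ := S.perturb hb hf hfi v (lt_min hr hc0)
    obtain ⟨hA', hdeg⟩ := hst (fun y => f' y - v) ((hf'c.mono hYW).sub continuousOn_const) (fun y hy => by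
      rw [sub_sub_sub_cancel_right]
      exact (hf'r y (hYW hy)).trans_le (min_le_left _ _))
    have hcov : ∀ y ∈ Y, f' y = v → y ∈ 𝒰 := by
      intro y hy h0
      by_contra hyU
      have h1 := hc0b y ⟨subset_closure hy, hyU⟩
      have h2 := (hf'r y (hYW (subset_closure hy))).trans_le (min_le_right _ _)
      rw [h0, norm_sub_rev] at h2
      linarith
    have hYi' : ∀ i, ∀ y ∈ Y, h^[i] y ∈ Y := fun i y hy => (show MapsTo h Y Y from hYi).iterate i hy
    have hYi2 : ∀ i < p, ∀ y ∈ W, h^[i] y ∈ Y → y ∈ Y := by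
      intro i hi y hy h1
      rw [← S.inv hi.le hy]
      exact hYi' _ _ h1
    have hYsW : Y ⊆ W := subset_closure.trans hYW
    obtain ⟨c, ρ, ρ'⟩ := b
    have p1 : 0 < ρ := hb.p1
    have p2 : ρ < ρ' := hb.p2
    have hsub : closedBall c ρ' ⊆ ball z R := hb.sub
    set P := Y ∩ ball c ρ with hP
    have hAP : Adm (fun y => f' y - v) P := by
      refine ⟨hY.inter isOpen_ball, hYb.subset inter_subset_left, hA'.co.mono (closure_mono inter_subset_left), ?_⟩
      intro y hy h0
      rcases frontier_inter_subset _ _ hy with h1 | h1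
      · exact hA'.nz y h1.1 h0
      · exact hf's y (frontier_ball_subset_sphere h1.2) (sub_eq_zero.1 h0)
    have hPR : closure P ⊆ ball z R := ((closure_mono inter_subset_right).trans closure_ball_subset_closedBall).trans
      ((closedBall_subset_closedBall p2.le).trans hsub)
    set Pi : ℕ → Set (EE n) := fun i => W ∩ h^[i] ⁻¹' P with hPi
    have hPiY : ∀ i < p, Pi i ⊆ Y := fun i hi y hy => hYi2 i hi y hy.1 hy.2.1
    have hPiA : ∀ i < p, Adm (fun y => f' y - v) (Pi i) ∧ deg (fun y => f' y - v) (Pi i) = deg (fun y => f' y - v) P := by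
      intro i hi
      obtain ⟨h1, h2⟩ := deg_shrink S.op S.hε S.hεR (S.coi i) (S.coi (p - i)) (S.mti i) (S.mti (p - i))
        (fun y hy => S.inv hi.le hy) (fun y hy => S.inv' hi.le hy) (fun y hy => S.idi i hy) S.RW hPR hAP
      obtain ⟨h3, h4⟩ := h1.congr (G := fun y => f' y - v) (fun y hy => by
        have hyW : y ∈ W := hYW (closure_mono (hPiY i hi) hy)
        simp only [S.invt hf'i i hyW])
      exact ⟨h3, h4.trans h2⟩
    have hPid : ∀ i < p, ∀ j < p, i ≠ j → Disjoint (Pi i) (Pi j) := by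
      have key : ∀ i < p, ∀ j < p, i < j → Disjoint (Pi i) (Pi j) := by
        intro i hi j hj hij
        rw [Set.disjoint_left]
        rintro y ⟨hyW, h1⟩ ⟨-, h2⟩
        have hin : ball c ρ ⊆ closedBall c ρ' := ball_subset_closedBall.trans (closedBall_subset_closedBall p2.le)
        refine hb.dj (h^[i] y) (hin h1.2) (j - i) (by omega) (by omega) ?_
        rw [← Function.iterate_add_apply, Nat.sub_add_cancel hij.le]
        exact hin h2.2
      intro i hi j hj hij
      rcases lt_or_gt_of_ne hij with h1 | h1
      · exact key i hi j hj h1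
      · exact (key j hj i hi h1).symm
    obtain ⟨hAV1, hdV1⟩ := deg_sum p (fun i hi => (hPiA i hi).1) hPid
    set V1 := ⋃ i < p, Pi i with hV1
    set V2 := Y ∩ ⋂ i ∈ Finset.range p, (W ∩ h^[i] ⁻¹' (closedBall c ρ)ᶜ) with hV2
    have hV2o : IsOpen V2 := hY.inter (isOpen_biInter_finset fun i _ => S.isOpen_pre i isClosed_closedBall.isOpen_compl)
    have hV2m : ∀ y, y ∈ V2 ↔ y ∈ Y ∧ ∀ i < p, h^[i] y ∉ closedBall c ρ := by
      intro y
      simp only [hV2, mem_inter_iff, mem_iInter, Finset.mem_range, mem_preimage, mem_compl_iff]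
      constructor
      · rintro ⟨h1, h2⟩; exact ⟨h1, fun i hi => (h2 i hi).2⟩
      · rintro ⟨h1, h2⟩; exact ⟨h1, fun i hi => ⟨hYsW h1, h2 i hi⟩⟩
    have hV1Y : V1 ⊆ Y := iUnion₂_subset hPiY
    have hV2Y : V2 ⊆ Y := inter_subset_left
    have hdj : Disjoint V2 V1 := by
      rw [Set.disjoint_left]
      intro y h2 h1
      obtain ⟨i, hi, h3⟩ := mem_iUnion₂.1 h1
      exact ((hV2m y).1 h2).2 i hi (ball_subset_closedBall h3.2.2)
    have hzz : ∀ y ∈ Y, f' y - v = 0 → y ∈ V2 ∪ V1 := by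
      intro y hy h0
      by_cases hy1 : y ∈ V1
      · exact Or.inr hy1
      · left
        refine (hV2m y).2 ⟨hy, fun i hi hcl => ?_⟩
        by_cases hball : h^[i] y ∈ ball c ρ
        · exact hy1 (mem_iUnion₂.2 ⟨i, hi, hYsW hy, hYi' i y hy, hball⟩)
        · refine hf's (h^[i] y) ?_ ?_
          · have h3 : dist (h^[i] y) c ≤ ρ := hcl
            have h4 : ¬ dist (h^[i] y) c < ρ := hball
            exact le_antisymm h3 (not_lt.1 h4)
          · rw [S.invt hf'i i (hYsW hy)]; exact sub_eq_zero.1 h0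
    have hAV2 := hA'.left hV2o hAV1.op hV2Y hdj hzz
    have hsum := hA'.add hV2o hAV1.op hV2Y hV1Y hdj hzz
    rw [← hdeg, hsum]
    refine dvd_add ?_ ?_
    · refine ih (fun b' hb' => hGB b' (by simp [hb'])) f' V2 hf'c hf'i hV2o hAV2.bd
        ((closure_mono hV2Y).trans hYW) ?_ (fun y hy h0 => hAV2.nz y hy (sub_eq_zero.2 h0)) ?_
      · intro y hy
        rw [hV2m] at hy ⊢
        refine ⟨hYi y hy.1, fun i hi => ?_⟩
        rw [← Function.iterate_succ_apply]
        by_cases hi1 : i + 1 < p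
        · exact hy.2 (i + 1) hi1
        · have : i.succ = p := by omega
          rw [this, S.per y (hYsW hy.1)]
          exact hy.2 0 S.pp
      · intro y hy h0
        obtain ⟨-, b', hb', i, hi, hin⟩ := hcov y (hV2Y hy) h0
        rcases List.mem_cons.1 hb' with rfl | hb'
        · exact (((hV2m y).1 hy).2 i hi (ball_subset_closedBall hin)).elim
        · exact ⟨b', hb', i, hi, hin⟩
    · rw [hdV1, Finset.sum_congr rfl fun i hi => (hPiA i (Finset.mem_range.1 hi)).2]
      simp

end
end Newm
end

section
open Set Filter Topology MeasureTheory Metric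

namespace Newm
variable {n : ℕ}

lemma exists_tent (z : EE n) {ε R : ℝ} (hε : 0 < ε) (hεR : ε < R) : ∃ Φ : EE n → EE n, Continuous Φ ∧
    (∀ y, ‖y - z‖ ≤ ε → Φ y = y - z) ∧ (∀ y, R ≤ ‖y - z‖ → Φ y = 0) ∧ (∀ y, ‖Φ y‖ ≤ ε) ∧
    (∀ y, ε < ‖y - z‖ → ‖y - z‖ < R → 0 < ‖Φ y‖ ∧ ‖Φ y‖ < ε) ∧
    (∀ y y', ε < ‖y - z‖ → ‖y - z‖ < R → ε < ‖y' - z‖ → ‖y' - z‖ < R → Φ y = Φ y' → y = y') := by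
  have hRε : 0 < R - ε := by linarith
  set μ : ℝ → ℝ := fun s => min 1 (max 0 (ε * (R - s) / ((R - ε) * max s ε))) with hμ
  have hmax : ∀ s : ℝ, 0 < max s ε := fun s => lt_max_of_lt_right hε
  have hμc : Continuous μ := by
    refine continuous_const.min (continuous_const.max (Continuous.div (by fun_prop) (by fun_prop) fun s => ?_))
    exact (mul_pos hRε (hmax s)).ne'
  have m1 : ∀ s, s ≤ ε → μ s = 1 := by
    intro s hs
    have : 1 ≤ ε * (R - s) / ((R - ε) * max s ε) := by
      rw [max_eq_right hs, le_div_iff₀ (by positivity)]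
      nlinarith
    simp only [hμ]
    exact min_eq_left (this.trans (le_max_right _ _))
  have m2 : ∀ s, R ≤ s → μ s = 0 := by
    intro s hs
    have : ε * (R - s) / ((R - ε) * max s ε) ≤ 0 := by
      apply div_nonpos_of_nonpos_of_nonneg
      · nlinarith
      · exact (mul_pos hRε (hmax s)).le
    simp only [hμ]
    rw [max_eq_left this]; norm_num
  have m3 : ∀ s, ε < s → s < R → μ s = ε * (R - s) / ((R - ε) * s) := by
    intro s h1 h2
    have hs : 0 < s := hε.trans h1
    simp only [hμ]
    rw [max_eq_left h1.le, max_eq_right, min_eq_right]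
    · rw [div_le_one (by positivity)]; nlinarith
    · have : 0 < R - s := by linarith
      positivity
  have m0 : ∀ s, 0 ≤ μ s := fun s => le_min zero_le_one (le_max_left _ _)
  have hn : ∀ y : EE n, ‖μ ‖y - z‖ • (y - z)‖ = μ ‖y - z‖ * ‖y - z‖ := by
    intro y
    rw [norm_smul, Real.norm_eq_abs, abs_of_nonneg (m0 _)]
  have m4 : ∀ s, ε < s → s < R → μ s * s = ε * (R - s) / (R - ε) := by
    intro s h1 h2
    have hs : 0 < s := hε.trans h1
    rw [m3 s h1 h2]
    field_simp
  have h5 : ∀ y : EE n, ε < ‖y - z‖ → ‖y - z‖ < R → 0 < ‖μ ‖y - z‖ • (y - z)‖ ∧ ‖μ ‖y - z‖ • (y - z)‖ < ε := by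
    intro y h1 h2
    rw [hn, m4 _ h1 h2]
    have : 0 < R - ‖y - z‖ := by linarith
    refine ⟨by positivity, ?_⟩
    rw [div_lt_iff₀ hRε]
    nlinarith
  refine ⟨fun y => μ ‖y - z‖ • (y - z), (hμc.comp (by fun_prop)).smul (by fun_prop), ?_, ?_, ?_, h5, ?_⟩
  · intro y hy; simp only [m1 _ hy, one_smul]
  · intro y hy; simp only [m2 _ hy, zero_smul]
  · intro y
    by_cases h1 : ‖y - z‖ ≤ ε
    · simp only [m1 _ h1, one_smul]; exact h1
    · by_cases h2 : R ≤ ‖y - z‖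
      · simp only [m2 _ h2, zero_smul, norm_zero]; exact hε.le
      · exact (h5 y (not_le.1 h1) (not_le.1 h2)).2.le
  · intro y y' h1 h2 h3 h4 he
    have he2 := congrArg norm he
    simp only [hn] at he2
    rw [m4 _ h1 h2, m4 _ h3 h4, div_left_inj' hRε.ne'] at he2
    have hs : ‖y - z‖ = ‖y' - z‖ := by
      have := mul_left_cancel₀ hε.ne' he2
      linarith
    simp only [hs] at he
    have hpos : μ ‖y' - z‖ ≠ 0 := by
      intro h0
      have := (h5 y' h3 h4).1
      rw [h0, zero_smul, norm_zero] at this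
      exact lt_irrefl _ this
    have := smul_right_injective (EE n) hpos he
    simpa using this

section
variable {W : Set (EE n)} {h : EE n → EE n} {p : ℕ} {z : EE n} {ε R : ℝ}

lemma Sys.fix_of_fix (S : Sys W h p z ε R) (hp : p.Prime) {x : EE n} (hx : x ∈ W) {j : ℕ} (hj : 0 < j)
    (hjp : j < p) (hjx : h^[j] x = x) : h x = x := by
  have h1 : Function.IsPeriodicPt h (j.gcd p) x := Function.IsPeriodicPt.gcd hjx (S.per x hx)
  have : j.gcd p = 1 := by
    rw [Nat.gcd_comm]
    exact (hp.coprime_iff_not_dvd).2 (Nat.not_dvd_of_pos_of_lt hj hjp)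
  rw [this] at h1
  exact h1

lemma Sys.fix_back (S : Sys W h p z ε R) {y : EE n} (hy : y ∈ W) {i : ℕ} (hi : i ≤ p)
    (hf : h (h^[i] y) = h^[i] y) : h y = y := by
  have := S.inv hi hy
  rw [Function.iterate_fixed hf] at this
  rw [this] at hf
  exact hf

lemma Sys.exists_GB (S : Sys W h p z ε R) (hp : p.Prime) {x : EE n} (hx : x ∈ ball z R) (hne : h x ≠ x) :
    ∃ ρ ρ', GB h p z R (x, ρ, ρ') := by
  have hxW : x ∈ W := S.RW (ball_subset_closedBall hx)
  have h1 : ∀ j ∈ Finset.range p, ∀ᶠ r in 𝓝[>] (0:ℝ), 0 < j → ∀ y ∈ closedBall x r, h^[j] y ∉ closedBall x r := by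
    intro j hj
    by_cases hj0 : 0 < j
    · have hjx : h^[j] x ≠ x := fun h0 => hne (S.fix_of_fix hp hxW hj0 (Finset.mem_range.1 hj) h0)
      obtain ⟨A, B, hA, hB, hxA, hxB, hAB⟩ := t2_separation hjx
      have hcont : ContinuousAt h^[j] x := (S.coi j).continuousAt (S.op.mem_nhds hxW)
      have hN : h^[j] ⁻¹' A ∩ B ∈ 𝓝 x := inter_mem (hcont (hA.mem_nhds hxA)) (hB.mem_nhds hxB)
      obtain ⟨r, hr, hrs⟩ := Metric.nhds_basis_closedBall.mem_iff.1 hN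
      filter_upwards [Ioc_mem_nhdsGT hr] with s hs _ y hy hy2
      have e1 := hrs (closedBall_subset_closedBall hs.2 hy)
      have e2 := hrs (closedBall_subset_closedBall hs.2 hy2)
      exact hAB.le_bot ⟨e1.1, e2.2⟩
    · exact Eventually.of_forall fun r h => (hj0 h).elim
  have h2 := (Filter.eventually_all_finset (Finset.range p)).2 h1
  obtain ⟨r, hr, hrs⟩ := Metric.nhds_basis_closedBall.mem_iff.1 (isOpen_ball.mem_nhds hx)
  obtain ⟨ρ', hρ, hρ2⟩ := (h2.and (Ioc_mem_nhdsGT hr)).exists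
  have : 0 < ρ' := hρ2.1
  refine ⟨ρ' / 2, ρ', ⟨by simp; linarith, by simp; linarith, (closedBall_subset_closedBall hρ2.2).trans hrs, ?_⟩⟩
  intro y hy j hj hjp
  exact hρ j (Finset.mem_range.2 hjp) hj y hy

theorem Sys.newman_local (S : Sys W h p z ε R) (hp : p.Prime) : ∀ w ∈ ball z R, h w = w := by
  intro w hw
  by_contra hne
  have hε := S.hε
  have hεR := S.hεR
  have hp0 : (0:ℝ) < p := by exact_mod_cast S.pp
  obtain ⟨Φ, hΦc, t1, t2, t3, t4, t5⟩ := exists_tent z hε hεR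
  have hwR : ‖w - z‖ < R := by rwa [mem_ball, dist_eq_norm] at hw
  have hwε : ε < ‖w - z‖ := by
    by_contra hcon
    exact hne (S.idb w (by rw [mem_closedBall, dist_eq_norm]; exact not_lt.1 hcon))
  set v := Φ w with hv
  have hv0 : 0 < ‖v‖ := (t4 w hwε hwR).1
  have hvε : ‖v‖ < ε := (t4 w hwε hwR).2
  set f : EE n → EE n := fun y => (p:ℝ)⁻¹ • ∑ i ∈ Finset.range p, Φ (h^[i] y) with hf
  have hfc : ContinuousOn f W := by
    have h1 : ContinuousOn (fun y => ∑ i ∈ Finset.range p, Φ (h^[i] y)) W :=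
      continuousOn_finsetSum _ fun i _ => hΦc.comp_continuousOn (S.coi i)
    exact h1.const_smul ((p:ℝ)⁻¹)
  have hfi : ∀ y ∈ W, f (h y) = f y := by
    intro y hy
    simp only [hf]
    congr 1
    have e1 := Finset.sum_range_succ (fun i => Φ (h^[i] y)) p
    have e2 := Finset.sum_range_succ' (fun i => Φ (h^[i] y)) p
    rw [e1] at e2
    simp only [S.per y hy, Function.iterate_zero, id, add_left_inj, Function.iterate_succ_apply] at e2
    exact e2.symm
  have hfix : ∀ y, h y = y → f y = Φ y := by
    intro y hy
    simp only [hf, Function.iterate_fixed hy, Finset.sum_const, Finset.card_range]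
    rw [← Nat.cast_smul_eq_nsmul ℝ, smul_smul, inv_mul_cancel₀ hp0.ne', one_smul]
  have hfb : ∀ y, ‖f y‖ ≤ ε := by
    intro y
    have : ‖∑ i ∈ Finset.range p, Φ (h^[i] y)‖ ≤ ∑ i ∈ Finset.range p, ε := norm_sum_le_of_le _ fun i _ => t3 _
    rw [Finset.sum_const, Finset.card_range, nsmul_eq_mul] at this
    simp only [hf, norm_smul, norm_inv, Real.norm_natCast]
    rw [inv_mul_le_iff₀ hp0]
    exact this
  have hfne : ∀ y, f y ≠ 0 → ∃ i < p, h^[i] y ∈ ball z R := by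
    intro y hy
    by_contra hcon
    push Not at hcon
    apply hy
    simp only [hf]
    rw [Finset.sum_eq_zero, smul_zero]
    intro i hi
    have := hcon i (Finset.mem_range.1 hi)
    rw [mem_ball, dist_eq_norm, not_lt] at this
    exact t2 _ this
  -- the compact invariant set
  set K : Set (EE n) := ⋃ i ∈ Finset.range p, h^[p - i] '' closedBall z R with hK
  have hKc : IsCompact K := (Finset.range p).isCompact_biUnion fun i _ =>
    (isCompact_closedBall z R).image_of_continuousOn ((S.coi _).mono S.RW)
  have hKW : K ⊆ W := iUnion₂_subset fun i _ => by
    rintro _ ⟨y, hy, rfl⟩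
    exact S.mti _ (S.RW hy)
  have hKm : ∀ y ∈ W, (∃ i < p, h^[i] y ∈ closedBall z R) → y ∈ K := by
    rintro y hy ⟨i, hi, h1⟩
    exact mem_iUnion₂.2 ⟨i, Finset.mem_range.2 hi, _, h1, S.inv hi.le hy⟩
  have hKh : ∀ y ∈ K, h y ∈ K := by
    intro y hy
    have hyW := hKW hy
    obtain ⟨i, hi, x, hx, rfl⟩ := mem_iUnion₂.1 hy
    have hip := Finset.mem_range.1 hi
    refine hKm _ (S.mt hyW) ?_
    rcases Nat.eq_zero_or_pos i with rfl | hi0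
    · refine ⟨p - 1, by have := S.pp; omega, ?_⟩
      rw [← Function.iterate_succ_apply]
      have : (p - 1).succ = p := by have := S.pp; omega
      rw [this, Nat.sub_zero, S.per x (S.RW hx), S.per x (S.RW hx)]
      exact hx
    · refine ⟨i - 1, by omega, ?_⟩
      rw [← Function.iterate_succ_apply]
      have : (i - 1).succ = i := by omega
      rw [this, S.inv' hip.le (S.RW hx)]
      exact hx
  have hKhi : ∀ i, ∀ y ∈ K, h^[i] y ∈ K := fun i y hy => (show MapsTo h K K from hKh).iterate i hy
  obtain ⟨N, hNo, hKN, hNW, hNc⟩ := exists_open_between_and_isCompact_closure hKc S.op hKW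
  set Y0 : Set (EE n) := ⋂ i ∈ Finset.range p, (W ∩ h^[i] ⁻¹' N) with hY0
  have hY0m : ∀ y, y ∈ Y0 ↔ ∀ i < p, y ∈ W ∧ h^[i] y ∈ N := by
    intro y; simp [hY0]
  have hY0o : IsOpen Y0 := isOpen_biInter_finset fun i _ => S.isOpen_pre i hNo
  have hY0N : Y0 ⊆ N := fun y hy => ((hY0m y).1 hy 0 S.pp).2
  have hKY : K ⊆ Y0 := fun y hy => (hY0m y).2 fun i _ => ⟨hKW hy, hKN (hKhi i y hy)⟩
  have hY0W : closure Y0 ⊆ W := (closure_mono hY0N).trans hNW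
  have hY0b : Bornology.IsBounded Y0 := hNc.isBounded.subset (hY0N.trans subset_closure)
  have hY0i : ∀ y ∈ Y0, h y ∈ Y0 := by
    intro y hy
    rw [hY0m] at hy ⊢
    intro i hi
    have hyW := (hy 0 S.pp).1
    refine ⟨S.mt hyW, ?_⟩
    rw [← Function.iterate_succ_apply]
    by_cases hi1 : i + 1 < p
    · exact (hy (i + 1) hi1).2
    · have : i.succ = p := by omega
      rw [this, S.per y hyW]
      exact (hy 0 S.pp).2
  have hfK : ∀ y ∈ W, y ∉ K → f y = 0 := by
    intro y hy hyK
    by_contra h0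
    obtain ⟨i, hi, h1⟩ := hfne y h0
    exact hyK (hKm y hy ⟨i, hi, ball_subset_closedBall h1⟩)
  have hAt : ∀ t : ℝ, t ≠ 0 → Adm (fun y => f y - t • v) Y0 := by
    intro t ht
    refine ⟨hY0o, hY0b, (hfc.mono hY0W).sub continuousOn_const, fun y hy h0 => ?_⟩
    have hyW := hY0W (frontier_subset_closure hy)
    rw [hY0o.frontier_eq] at hy
    rw [hfK y hyW fun hk => hy.2 (hKY hk), zero_sub, neg_eq_zero] at h0
    rcases smul_eq_zero.1 h0 with h1 | h1
    · exact ht h1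
    · rw [h1] at hv0; simp at hv0
  -- total degree zero
  set T := 1 + ε / ‖v‖ with hT
  have hT1 : 1 ≤ T := by rw [hT]; have : 0 < ε / ‖v‖ := div_pos hε hv0; linarith
  have hd0 : deg (fun y => f y - (1:ℝ) • v) Y0 = deg (fun y => f y - T • v) Y0 := by
    refine const_of_local (d := fun t => deg (fun y => f y - t • v) Y0) hT1 fun t ht => ?_
    obtain ⟨r, hr, hst⟩ := (hAt t (by linarith [ht.1])).stable
    refine ⟨ball t (r / ‖v‖), isOpen_ball, mem_ball_self (div_pos hr hv0), fun s hs => ?_⟩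
    refine (hst (fun y => f y - s • v) ((hfc.mono hY0W).sub continuousOn_const) fun y _ => ?_).2
    have : f y - s • v - (f y - t • v) = (t - s) • v := by rw [sub_smul]; abel
    rw [this, norm_smul, ← dist_eq_norm, dist_comm, ← lt_div_iff₀ hv0]
    exact hs.1
  have hdT : deg (fun y => f y - T • v) Y0 = 0 := by
    refine (hAt T (by linarith)).deg_zero fun y _ h0 => ?_
    have h1 := hfb y
    rw [sub_eq_zero.1 h0, norm_smul, Real.norm_eq_abs, abs_of_pos (by linarith), hT, add_mul,
      div_mul_cancel₀ _ hv0.ne'] at h1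
    linarith
  have hA1 := hAt 1 one_ne_zero
  rw [hdT] at hd0
  simp only [one_smul] at hd0 hA1
  -- splitting
  set Y := Y0 \ closedBall z ε with hY
  have hYo : IsOpen Y := hY0o.sdiff isClosed_closedBall
  have hBK : ball z ε ⊆ K := fun y hy => hKm y (S.RW (closedBall_subset_closedBall hεR.le (ball_subset_closedBall hy)))
    ⟨0, S.pp, closedBall_subset_closedBall hεR.le (ball_subset_closedBall hy)⟩
  have hBY : ball z ε ⊆ Y0 := hBK.trans hKY
  have hdj : Disjoint Y (ball z ε) := by
    rw [Set.disjoint_left]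
    exact fun y hy h1 => hy.2 (ball_subset_closedBall h1)
  have hzz : ∀ y ∈ Y0, f y - v = 0 → y ∈ Y ∪ ball z ε := by
    intro y hy h0
    by_cases h1 : y ∈ closedBall z ε
    · right
      by_contra h2
      rw [mem_closedBall, dist_eq_norm] at h1
      rw [mem_ball, dist_eq_norm, not_lt] at h2
      have h3 : f y = y - z := by
        rw [hfix y (S.idb y (by rwa [mem_closedBall, dist_eq_norm])), t1 y h1]
      rw [sub_eq_zero.1 h0] at h3
      rw [h3] at hvε
      linarith
    · exact Or.inl ⟨hy, h1⟩
  have hsum := hA1.add hYo isOpen_ball sdiff_subset hBY hdj hzz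
  have hAY := hA1.left hYo isOpen_ball sdiff_subset hdj hzz
  have hdB : deg (fun y => f y - v) (ball z ε) = 1 := by
    obtain ⟨h1, h2⟩ := deg_id (isOpen_ball (x := z) (ε := ε)) isBounded_ball (c := z + v) (by
      rw [mem_ball, dist_eq_norm, add_sub_cancel_left]; exact hvε)
    rw [← h2]
    refine (h1.congr fun y hy => ?_).2
    have hy' := closure_ball_subset_closedBall hy
    show f y - v = y - (z + v)
    rw [hfix y (S.idb y hy'), t1 y (by rwa [mem_closedBall, dist_eq_norm] at hy')]
    abel
  -- free part
  have hYh : ∀ y ∈ Y, h y ∈ Y := by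
    rintro y ⟨hy, hyb⟩
    refine ⟨hY0i y hy, fun hcon => hyb ?_⟩
    have hyW := hY0W (subset_closure hy)
    have h1 : h (h^[1] y) = h^[1] y := S.idb _ hcon
    have h2 := S.fix_back hyW (i := 1) S.pp h1
    rwa [h2] at hcon
  have hfree : ∀ y ∈ Y, f y = v → ∃ x, ∃ ρ ρ', GB h p z R (x, ρ, ρ') ∧ ∃ i < p, h^[i] y ∈ ball x ρ := by
    rintro y ⟨hy, hyb⟩ h0
    have hyW := hY0W (subset_closure hy)
    obtain ⟨i, hi, hiR⟩ := hfne y (by rw [h0]; exact norm_pos_iff.1 hv0)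
    have hnf : h (h^[i] y) ≠ h^[i] y := by
      intro hcon
      have h2 := S.fix_back hyW hi.le hcon
      rw [hfix y h2] at h0
      have h3 : ε < ‖y - z‖ := by rwa [mem_closedBall, dist_eq_norm, not_le] at hyb
      have h4 : ‖y - z‖ < R := by
        by_contra h5
        rw [t2 y (not_lt.1 h5)] at h0
        rw [← h0] at hv0; simp at hv0
      have := t5 y w h3 h4 hwε hwR h0
      rw [this] at h2
      exact hne h2
    obtain ⟨ρ, ρ', hg⟩ := S.exists_GB hp hiR hnf
    exact ⟨_, ρ, ρ', hg, i, hi, mem_ball_self hg.p1⟩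
  have hdvd : (p : ℤ) ∣ deg (fun y => f y - v) Y := by
    have hZc : IsCompact (closure Y ∩ (fun y => f y - v) ⁻¹' {0}) :=
      hAY.bd.isCompact_closure.of_isClosed_subset
        (hAY.co.preimage_isClosed_of_isClosed isClosed_closure isClosed_singleton) inter_subset_left
    have hex : ∀ y ∈ closure Y ∩ (fun y => f y - v) ⁻¹' {0}, ∃ b, GB h p z R b ∧ ∃ i < p, h^[i] y ∈ ball b.1 b.2.1 := by
      rintro y ⟨hy, h0⟩
      obtain ⟨x, ρ, ρ', h1, h2⟩ := hfree y (hAY.mem_of_zero hy h0) (sub_eq_zero.1 h0)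
      exact ⟨_, h1, h2⟩
    choose! b hb1 i hi1 hi2 using hex
    obtain ⟨t, htZ, ht⟩ := hZc.elim_nhds_subcover (fun y => W ∩ h^[i y] ⁻¹' ball (b y).1 (b y).2.1) (fun y hy =>
      (S.isOpen_pre (i y) isOpen_ball).mem_nhds ⟨hY0W (closure_mono sdiff_subset hy.1), hi2 y hy⟩)
    refine S.div_claim v (t.toList.map b) ?_ f Y hfc hfi hYo hAY.bd ((closure_mono sdiff_subset).trans hY0W) hYh
      (fun y hy h0 => hAY.nz y hy (sub_eq_zero.2 h0)) ?_
    · intro b' hb'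
      obtain ⟨y, hy, rfl⟩ := List.mem_map.1 hb'
      exact hb1 y (htZ y (Finset.mem_toList.1 hy))
    · intro y hy h0
      obtain ⟨x, hx, hyx⟩ := mem_iUnion₂.1 (ht ⟨subset_closure hy, sub_eq_zero.2 h0⟩)
      exact ⟨b x, List.mem_map.2 ⟨x, Finset.mem_toList.2 hx, rfl⟩, i x, hi1 x (htZ x hx), hyx.2⟩
  rw [hd0, hdB] at hsum
  have h1 : (p : ℤ) ∣ 1 := by
    have : (1 : ℤ) = -deg (fun y => f y - v) Y := by linarith
    rw [this]
    exact (dvd_neg).2 hdvd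
  have h2 : p ∣ 1 := by exact_mod_cast h1
  exact hp.one_lt.ne' (Nat.dvd_one.1 h2)

end
end Newm
end

section
open Set Filter Topology MeasureTheory Metric
namespace Newm
variable {n : ℕ}

theorem chart_step {M : Type*} [TopologicalSpace M] (φ : OpenPartialHomeomorph M (EE n))
    {A : Set M} (hA : IsOpen A) (hAs : A ⊆ φ.source) {h : M → M} (hc : ContinuousOn h A)
    (hm : MapsTo h A A) {p : ℕ} (hp : p.Prime) (hper : ∀ y ∈ A, h^[p] y = y) {x : M} (hx : x ∈ A)
    (hxc : x ∈ closure (interior {y | y ∈ A ∧ h y = y})) :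
    x ∈ interior {y | y ∈ A ∧ h y = y} := by
  set W := φ '' A with hW
  have hWo : IsOpen W := φ.isOpen_image_of_subset_source hA hAs
  set k : EE n → EE n := fun y => φ (h (φ.symm y)) with hk
  have hkφ : ∀ y ∈ A, k (φ y) = φ (h y) := by
    intro y hy
    simp only [hk]
    rw [φ.left_inv (hAs hy)]
  have hkm : MapsTo k W W := by
    rintro _ ⟨y, hy, rfl⟩
    rw [hkφ y hy]
    exact ⟨_, hm hy, rfl⟩
  have hki : ∀ i, ∀ y ∈ A, k^[i] (φ y) = φ (h^[i] y) := by
    intro i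
    induction i with
    | zero => intro y _; rfl
    | succ i ih =>
      intro y hy
      rw [Function.iterate_succ_apply, Function.iterate_succ_apply, hkφ y hy, ih _ (hm hy)]
  have hkc : ContinuousOn k W := by
    have h1 : ContinuousOn φ.symm W := φ.continuousOn_symm.mono (by
      rintro _ ⟨y, hy, rfl⟩; exact φ.map_source (hAs hy))
    have h2 : MapsTo φ.symm W A := by
      rintro _ ⟨y, hy, rfl⟩; rwa [φ.left_inv (hAs hy)]
    exact (φ.continuousOn.mono hAs).comp (hc.comp h1 h2) (fun y hy => hm (h2 hy))
  obtain ⟨r, hr, hrW⟩ := Metric.isOpen_iff.1 hWo (φ x) ⟨x, hx, rfl⟩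
  set r' := r / 4 with hr'
  have hV : IsOpen (A ∩ φ ⁻¹' ball (φ x) r') :=
    (φ.continuousOn.mono hAs).isOpen_inter_preimage hA isOpen_ball
  have hr0 : 0 < r' := by positivity
  obtain ⟨y, ⟨hyA, hyb⟩, hyF⟩ := _root_.mem_closure_iff.1 hxc _ hV ⟨hx, mem_ball_self hr0⟩
  have hFo : IsOpen (φ '' interior {y | y ∈ A ∧ h y = y}) :=
    φ.isOpen_image_of_subset_source isOpen_interior fun y hy => hAs (interior_subset hy).1
  obtain ⟨e, he, heF⟩ := Metric.isOpen_iff.1 hFo (φ y) ⟨y, hyF, rfl⟩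
  have hyd : dist (φ y) (φ x) < r' := hyb
  have S : Sys W k p (φ y) (min (e / 2) r') (2 * r') :=
    { op := hWo, co := hkc, mt := hkm, pp := hp.pos
      per := by
        rintro _ ⟨w, hw, rfl⟩
        rw [hki p w hw, hper w hw]
      hε := lt_min (by positivity) hr0
      hεR := (min_le_right _ _).trans_lt (by linarith)
      RW := by
        intro w hw
        refine hrW ?_
        rw [mem_closedBall] at hw
        rw [mem_ball]
        have := dist_triangle w (φ y) (φ x)
        linarith
      idb := by
        intro w hw
        have h1 : w ∈ ball (φ y) e := by
          rw [mem_closedBall] at hw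
          rw [mem_ball]
          have := min_le_left (e / 2) r'
          linarith
        obtain ⟨u, hu, rfl⟩ := heF h1
        have hu' := interior_subset hu
        rw [hkφ u hu'.1, hu'.2] }
  have hS := S.newman_local hp
  refine mem_interior.2 ⟨_, ?_, hV, ⟨hx, mem_ball_self hr0⟩⟩
  rintro w ⟨hw, hwb⟩
  refine ⟨hw, ?_⟩
  have h1 := hS (φ w) (by
    rw [mem_ball]
    have h2 : dist (φ w) (φ x) < r' := hwb
    have := dist_triangle_right (φ w) (φ y) (φ x)
    linarith)
  rw [hkφ w hw] at h1
  exact φ.injOn (hAs (hm hw)) (hAs hw) h1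

theorem newman_prime {M : Type*} [TopologicalSpace M] [T2Space M]
    [ChartedSpace (EuclideanSpace ℝ (Fin n)) M]
    {W : Set M} (hW : IsOpen W) (hWc : IsPreconnected W) {h : M → M} (hc : ContinuousOn h W)
    (hm : MapsTo h W W) {p : ℕ} (hp : p.Prime) (hper : ∀ y ∈ W, h^[p] y = y)
    (hne : (interior {y | y ∈ W ∧ h y = y}).Nonempty) : ∀ y ∈ W, h y = y := by
  set F := interior {y | y ∈ W ∧ h y = y} with hF
  have hFW : F ⊆ W := fun y hy => (interior_subset hy).1
  have hmi : ∀ i, MapsTo h^[i] W W := fun i => hm.iterate i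
  have hci : ∀ i, ContinuousOn h^[i] W := by
    intro i
    induction i with
    | zero => exact continuousOn_id
    | succ i ih => exact ih.comp hc hm
  have key : closure F ∩ W ⊆ F := by
    rintro x ⟨hxc, hxW⟩
    have hhx : h x = x := by
      have hnb : (𝓝[F] x).NeBot := mem_closure_iff_nhdsWithin_neBot.1 hxc
      have h1 : Tendsto h (𝓝[F] x) (𝓝 (h x)) := ((hc x hxW).mono hFW).tendsto
      have h2 : Tendsto h (𝓝[F] x) (𝓝 x) := by
        refine (tendsto_id.mono_left nhdsWithin_le_nhds).congr' ?_
        filter_upwards [self_mem_nhdsWithin] with y hy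
        exact (interior_subset hy).2.symm
      exact tendsto_nhds_unique h1 h2
    have hhxi : ∀ i, h^[i] x = x := fun i => Function.iterate_fixed hhx i
    let φ : OpenPartialHomeomorph M (EE n) :=
      (chartAt (EuclideanSpace ℝ (Fin n)) x).transHomeomorph
        (EuclideanSpace.equiv (Fin n) ℝ).toHomeomorph
    have hxs : x ∈ φ.source := mem_chart_source _ x
    set A : Set M := ⋂ i ∈ Finset.range p, (W ∩ h^[i] ⁻¹' φ.source) with hA
    have hAm : ∀ y, y ∈ A ↔ ∀ i < p, y ∈ W ∧ h^[i] y ∈ φ.source := by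
      intro y; simp [hA]
    have hAo : IsOpen A := isOpen_biInter_finset fun i _ =>
      (hci i).isOpen_inter_preimage hW φ.open_source
    have hAW : A ⊆ W := fun y hy => ((hAm y).1 hy 0 hp.pos).1
    have hAs : A ⊆ φ.source := fun y hy => ((hAm y).1 hy 0 hp.pos).2
    have hAi : MapsTo h A A := by
      intro y hy
      have hyW := hAW hy
      rw [hAm] at hy ⊢
      intro i hi
      refine ⟨hm hyW, ?_⟩
      rw [← Function.iterate_succ_apply]
      by_cases hi1 : i + 1 < p
      · exact (hy (i + 1) hi1).2
      · have : i.succ = p := by omega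
        rw [this, hper y hyW]
        exact (hy 0 hp.pos).2
    have hxA : x ∈ A := (hAm x).2 fun i _ => ⟨hxW, by rw [hhxi]; exact hxs⟩
    have hx := chart_step φ hAo hAs (hc.mono hAW) hAi hp (fun y hy => hper y (hAW hy)) hxA (by
      rw [_root_.mem_closure_iff]
      intro o ho hxo
      obtain ⟨y, ⟨hyo, hyA⟩, hyF⟩ := _root_.mem_closure_iff.1 hxc (o ∩ A) (ho.inter hAo) ⟨hxo, hxA⟩
      refine ⟨y, hyo, mem_interior.2 ⟨A ∩ F, ?_, hAo.inter isOpen_interior, hyA, hyF⟩⟩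
      rintro u ⟨hu, huF⟩
      exact ⟨hu, (interior_subset huF).2⟩)
    have hsub : {y | y ∈ A ∧ h y = y} ⊆ {y | y ∈ W ∧ h y = y} := fun y hy => ⟨hAW hy.1, hy.2⟩
    exact interior_mono hsub hx
  have := hWc.subset_of_closure_inter_subset isOpen_interior
    (hne.mono fun y hy => ⟨hFW hy, hy⟩) key
  exact fun y hy => (interior_subset (this hy)).2

theorem newman (n : ℕ) {M : Type*} [TopologicalSpace M] [T2Space M]
    [ChartedSpace (EuclideanSpace ℝ (Fin n)) M]
    {W : Set M} (hW : IsOpen W) (hWc : IsPreconnected W) {h : M → M} (hc : ContinuousOn h W)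
    (hm : MapsTo h W W)
    (hne : (interior {y | y ∈ W ∧ h y = y}).Nonempty) (m : ℕ) (hm0 : 0 < m)
    (hper : ∀ y ∈ W, h^[m] y = y) : ∀ y ∈ W, h y = y := by
  have hci : ∀ i, ContinuousOn h^[i] W := by
    intro i
    induction i with
    | zero => exact continuousOn_id
    | succ i ih => exact ih.comp hc hm
  induction m using Nat.strong_induction_on with
  | _ m ih =>
    by_cases h1 : m = 1
    · subst h1; exact hper
    · have hp := Nat.minFac_prime h1
      set p := m.minFac
      have hmul : m / p * p = m := Nat.div_mul_cancel (Nat.minFac_dvd m)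
      have hk0 : 0 < m / p := Nat.div_pos (Nat.minFac_le hm0) hp.pos
      have hlt : m / p < m := Nat.div_lt_self hm0 hp.one_lt
      refine ih (m / p) hlt hk0 ?_
      refine newman_prime (n := n) hW hWc (hci _) (hm.iterate _) hp (fun y hy => ?_) (hne.mono ?_)
      · rw [← Function.iterate_mul, hmul, hper y hy]
      · exact interior_mono fun y hy => ⟨hy.1, Function.iterate_fixed hy.2 _⟩

end Newm
end

section
open Set Filter Topology MeasureTheory Metric
open scoped Pointwise
namespace Newm

section act
variable {G M : Type*} [Group G] [TopologicalSpace M] [MulAction G M]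

/-- fixed point set of a group element -/
def Fx (M : Type*) [MulAction G M] (g : G) : Set M := {x | g • x = x}

theorem Fx_pow (g : G) (a : ℕ) : Fx M g ⊆ Fx M (g ^ a) := by
  intro x (hx : g • x = x)
  show g ^ a • x = x
  rw [← smul_iterate_apply]
  exact Function.iterate_fixed hx a

variable [ContinuousConstSMul G M] [T2Space M]

theorem Fx_closed (g : G) : IsClosed (Fx M g) := isClosed_eq (continuous_const_smul g) continuous_id

theorem Fx_int {g : G} {x : M} (hx : x ∈ interior (Fx M g)) : g • x = x := by
  have : x ∈ Fx M g := interior_subset hx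
  exact this

variable [LocallyCompactSpace M]

theorem baire_per (g : G) {S : Set M} (hS : IsLocallyClosed S) (hne : S.Nonempty)
    (hper : ∀ y ∈ S, ∃ m : ℕ, 0 < m ∧ y ∈ Fx M (g ^ m)) :
    ∃ m : ℕ, 0 < m ∧ ∃ N : Set M, IsOpen N ∧ (S ∩ N).Nonempty ∧ S ∩ N ⊆ Fx M (g ^ m) := by
  have := hS.locallyCompactSpace
  have : Nonempty S := hne.to_subtype
  obtain ⟨m, hm⟩ := nonempty_interior_of_iUnion_of_closed
    (f := fun m : ℕ => ((↑) : S → M) ⁻¹' Fx M (g ^ (m + 1)))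
    (fun m => (Fx_closed _).preimage continuous_subtype_val) (by
      refine eq_univ_of_forall fun y => ?_
      obtain ⟨m, hm, h⟩ := hper y y.2
      refine mem_iUnion.2 ⟨m - 1, ?_⟩
      have : m - 1 + 1 = m := by omega
      show (y : M) ∈ Fx M (g ^ (m - 1 + 1))
      rwa [this])
  obtain ⟨y, hy⟩ := hm
  obtain ⟨V, hV, hVo, hyV⟩ := mem_interior.1 hy
  obtain ⟨N, hN, rfl⟩ := isOpen_induced_iff.1 hVo
  refine ⟨m + 1, by omega, N, hN, ⟨y, y.2, hyV⟩, ?_⟩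
  rintro z ⟨hz, hzN⟩
  exact hV (show (⟨z, hz⟩ : S) ∈ _ from hzN)

variable [T2Space (Quotient (MulAction.orbitRel G M))]

theorem sat_closed {K : Set M} (hK : IsCompact K) :
    IsClosed {y : M | ∃ k ∈ K, y ∈ MulAction.orbit G k} := by
  let q : M → Quotient (MulAction.orbitRel G M) := Quotient.mk _
  have hq : Continuous q := continuous_quotient_mk'
  have h1 : {y : M | ∃ k ∈ K, y ∈ MulAction.orbit G k} = q ⁻¹' (q '' K) := by
    ext y
    constructor
    · rintro ⟨k, hk, h⟩
      exact ⟨k, hk, (Quotient.sound (s := MulAction.orbitRel G M) h).symm⟩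
    · rintro ⟨k, hk, h⟩
      exact ⟨k, hk, Quotient.exact (s := MulAction.orbitRel G M) h.symm⟩
  rw [h1]
  exact (hK.image hq).isClosed.preimage hq

theorem orbit_closed (x : M) : IsClosed (MulAction.orbit G x) := by
  have := sat_closed (G := G) (isCompact_singleton (x := x))
  convert this using 1
  ext y; simp

variable [Countable G]

theorem orbit_isolated (x : M) : ∃ U : Set M, IsOpen U ∧ x ∈ U ∧ U ∩ MulAction.orbit G x ⊆ {x} := by
  have hcl := orbit_closed (G := G) x
  have : LocallyCompactSpace (MulAction.orbit G x) := hcl.isLocallyClosed.locallyCompactSpace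
  have : Nonempty (MulAction.orbit G x) := ⟨⟨x, MulAction.mem_orbit_self x⟩⟩
  obtain ⟨a, b, hb⟩ := nonempty_interior_of_iUnion_of_closed
    (f := fun a : G => ({⟨a • x, MulAction.mem_orbit x a⟩} : Set (MulAction.orbit G x)))
    (fun a => isClosed_singleton) (by
      refine eq_univ_of_forall ?_
      rintro ⟨y, a, rfl⟩
      exact mem_iUnion.2 ⟨a, rfl⟩)
  obtain ⟨V, hV, hVo, hbV⟩ := mem_interior.1 hb
  obtain ⟨N, hN, rfl⟩ := isOpen_induced_iff.1 hVo
  have hba : (b : M) = a • x := congrArg Subtype.val (hV hbV)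
  refine ⟨(fun y => a • y) ⁻¹' N, hN.preimage (continuous_const_smul a), ?_, ?_⟩
  · show a • x ∈ N
    rw [← hba]; exact hbV
  · rintro y ⟨hy, c, rfl⟩
    have h1 : (⟨a • c • x, by rw [smul_smul]; exact MulAction.mem_orbit x _⟩ : MulAction.orbit G x) ∈
      ((↑) : MulAction.orbit G x → M) ⁻¹' N := hy
    have h2 := congrArg Subtype.val (hV h1)
    exact smul_left_cancel a h2

theorem orbit_finite (x : M) {K : Set M} (hK : IsCompact K) : (MulAction.orbit G x ∩ K).Finite := by
  have h : ∀ y : M, ∃ U ∈ 𝓝 y, U ∩ MulAction.orbit G x ⊆ {y} := by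
    intro y
    by_cases hy : y ∈ MulAction.orbit G x
    · obtain ⟨U, hU, hyU, h⟩ := orbit_isolated (G := G) y
      refine ⟨U, hU.mem_nhds hyU, ?_⟩
      rwa [MulAction.orbit_eq_iff.2 hy] at h
    · refine ⟨(MulAction.orbit G x)ᶜ, (orbit_closed x).isOpen_compl.mem_nhds hy, ?_⟩
      rintro z ⟨h1, h2⟩
      exact absurd h2 h1
  choose U hU hUx using h
  obtain ⟨t, -, ht⟩ := hK.elim_nhds_subcover U fun y _ => hU y
  refine t.finite_toSet.subset ?_
  rintro y ⟨hy, hyK⟩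
  obtain ⟨z, hz, hyz⟩ := mem_iUnion₂.1 (ht hyK)
  have : y = z := hUx z ⟨hyz, hy⟩
  rw [this]; exact hz

variable [LocallyConnectedSpace M]

theorem exists_inv (γ : G) {x : M} (hx : γ • x = x) {N : Set M} (hN : N ∈ 𝓝 x) :
    ∃ W : Set M, IsOpen W ∧ IsPreconnected W ∧ x ∈ W ∧ W ⊆ N ∧ (∀ y ∈ W, γ • y ∈ W) ∧
      ∀ y ∈ W, ∃ m : ℕ, 0 < m ∧ y ∈ Fx M (γ ^ m) := by
  obtain ⟨U₀, hU₀, hxU₀, hU₀x⟩ := orbit_isolated (G := G) x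
  obtain ⟨U, hUx, hUN, hUc⟩ := local_compact_nhds (inter_mem hN (hU₀.mem_nhds hxU₀))
  have hUcl := hUc.isClosed
  have hfr : IsCompact (frontier U) := hUc.of_isClosed_subset isClosed_frontier hUcl.frontier_subset
  set T := {y : M | ∃ k ∈ frontier U, y ∈ MulAction.orbit G k} with hT
  have hTc : IsClosed T := sat_closed hfr
  have hxi : x ∈ interior U := mem_interior_iff_mem_nhds.2 hUx
  have hxT : x ∉ T := by
    rintro ⟨k, hk, hxk⟩
    have h1 : k = x := hU₀x ⟨(hUN (hUcl.frontier_subset hk)).2, MulAction.mem_orbit_symm.1 hxk⟩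
    rw [h1, hUcl.frontier_eq] at hk
    exact hk.2 hxi
  set V := interior U ∩ Tᶜ with hV
  have hVo : IsOpen V := isOpen_interior.inter hTc.isOpen_compl
  have hxV : x ∈ V := ⟨hxi, hxT⟩
  have hWV := connectedComponentIn_subset V x
  set W := connectedComponentIn V x with hW
  have hWp : IsPreconnected W := isPreconnected_connectedComponentIn
  have hxW : x ∈ W := mem_connectedComponentIn hxV
  have himp : IsPreconnected ((fun y => γ • y) '' W) := hWp.image _ (continuous_const_smul γ).continuousOn
  have himx : x ∈ (fun y => γ • y) '' W := ⟨x, hxW, hx⟩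
  have himT : ∀ y ∈ (fun y => γ • y) '' W, y ∉ T := by
    rintro _ ⟨y, hy, rfl⟩ ⟨k, hk, hyk⟩
    refine (hWV hy).2 ⟨k, hk, ?_⟩
    have h1 := MulAction.mem_orbit_of_mem_orbit (γ⁻¹) hyk
    simpa using h1
  have himU : (fun y => γ • y) '' W ⊆ interior U := by
    refine himp.subset_of_closure_inter_subset isOpen_interior ⟨x, himx, hxi⟩ ?_
    rintro y ⟨h1, h2⟩
    by_contra h3
    refine himT y h2 ⟨y, ?_, MulAction.mem_orbit_self y⟩
    rw [hUcl.frontier_eq]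
    exact ⟨closure_minimal interior_subset hUcl h1, h3⟩
  have himW : (fun y => γ • y) '' W ⊆ W :=
    himp.subset_connectedComponentIn himx fun y hy => ⟨himU hy, himT y hy⟩
  have hinv : ∀ y ∈ W, γ • y ∈ W := fun y hy => himW ⟨y, hy, rfl⟩
  refine ⟨W, hVo.connectedComponentIn, hWp, hxW, fun y hy => (hUN (interior_subset (hWV hy).1)).1, hinv, ?_⟩
  intro y hy
  have hinvi : ∀ i : ℕ, γ ^ i • y ∈ W := by
    intro i
    rw [← smul_iterate_apply]
    exact (show MapsTo (fun y => γ • y) W W from hinv).iterate i hy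
  have hfin := orbit_finite (G := G) y hUc
  have hni : ¬ Function.Injective (fun i : ℕ => γ ^ i • y) := by
    intro hinj
    refine Set.infinite_range_of_injective hinj (hfin.subset ?_)
    rintro _ ⟨i, rfl⟩
    exact ⟨MulAction.mem_orbit y _, interior_subset (hWV (hinvi i)).1⟩
  have hlt : ∃ i j : ℕ, i < j ∧ γ ^ i • y = γ ^ j • y := by
    simp only [Function.Injective] at hni
    push Not at hni
    obtain ⟨i, j, h, hne⟩ := hni
    rcases lt_or_gt_of_ne hne with h1 | h1
    · exact ⟨i, j, h1, h⟩
    · exact ⟨j, i, h1, h.symm⟩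
  obtain ⟨i, j, hij, h⟩ := hlt
  refine ⟨j - i, by omega, ?_⟩
  show γ ^ (j - i) • y = y
  have h1 : γ ^ j = γ ^ i * γ ^ (j - i) := by rw [← pow_add]; congr 1; omega
  rw [h1, mul_smul] at h
  exact (smul_left_cancel _ h).symm


theorem lemA (n : ℕ) [ChartedSpace (EuclideanSpace ℝ (Fin n)) M] (γ : G) {m : ℕ} (hm : 0 < m) {y : M} (hy : y ∈ interior (Fx M (γ ^ m)))
    (hyc : y ∈ closure (interior (Fx M γ))) : y ∈ interior (Fx M γ) := by
  have hyf : y ∈ Fx M γ := closure_minimal interior_subset (Fx_closed γ) hyc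
  obtain ⟨W, hWo, hWp, hyW, hWN, hWi, -⟩ := exists_inv γ hyf (isOpen_interior.mem_nhds hy)
  obtain ⟨z, hzW, hz⟩ := _root_.mem_closure_iff.1 hyc W hWo hyW
  have := newman n hWo hWp (continuous_const_smul γ).continuousOn hWi
    ⟨z, mem_interior.2 ⟨W ∩ interior (Fx M γ), fun u hu => ⟨hu.1, Fx_int hu.2⟩,
      hWo.inter isOpen_interior, hzW, hz⟩⟩ m hm (fun u hu => by
        rw [smul_iterate_apply]; exact Fx_int (hWN hu))
  exact mem_interior.2 ⟨W, this, hWo, hyW⟩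

theorem fix_of_dense {γ : G} {W D : Set M} (hd : ∀ P : Set M, IsOpen P → P ⊆ W → P.Nonempty → (P ∩ D).Nonempty)
    (hW : IsOpen W) (h : W ∩ D ⊆ Fx M γ) : W ⊆ Fx M γ := by
  intro y hy
  refine closure_minimal h (Fx_closed γ) ?_
  rw [_root_.mem_closure_iff]
  intro o ho hyo
  obtain ⟨z, hz, hzD⟩ := hd (o ∩ W) (ho.inter hW) inter_subset_right ⟨y, hyo, hy⟩
  exact ⟨z, hz.1, hz.2, hzD⟩

theorem main_claim (n : ℕ) [ChartedSpace (EuclideanSpace ℝ (Fin n)) M] (g : G) {W : Set M} (hW : IsOpen W)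
    (hper : ∀ y ∈ W, ∃ m : ℕ, 0 < m ∧ y ∈ Fx M (g ^ m)) :
    ∀ y ∈ W, ∃ m : ℕ, 0 < m ∧ y ∈ interior (Fx M (g ^ m)) := by
  classical
  set D : Set M := {y | ∃ m : ℕ, 0 < m ∧ y ∈ interior (Fx M (g ^ m))} with hD
  have hDo : IsOpen D := by
    have : D = ⋃ m : ℕ, ⋃ _ : 0 < m, interior (Fx M (g ^ m)) := by ext; simp [hD]
    rw [this]
    exact isOpen_iUnion fun m => isOpen_iUnion fun _ => isOpen_interior
  by_contra hcon
  push Not at hcon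
  obtain ⟨y₀, hy₀, hy₀D⟩ := hcon
  have hy₀D' : y₀ ∉ D := by
    rintro ⟨m, hm, h⟩
    exact hy₀D m hm h
  obtain ⟨m, hm, N, hN, ⟨x, ⟨hxW, hxD⟩, hxN⟩, hNF⟩ := baire_per g (S := W ∩ Dᶜ)
    (hW.isLocallyClosed.inter hDo.isClosed_compl.isLocallyClosed) ⟨y₀, hy₀, hy₀D'⟩ (fun y hy => hper y hy.1)
  have hxf := hNF ⟨⟨hxW, hxD⟩, hxN⟩
  obtain ⟨W', hWo, hWp, hxW', hWN, hWi, -⟩ := exists_inv (g ^ m) hxf ((hN.inter hW).mem_nhds ⟨hxN, hxW⟩)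
  set h := g ^ m with hh
  have hEf : ∀ y ∈ W', y ∉ D → h • y = y := fun y hy hyD => hNF ⟨⟨(hWN hy).2, hyD⟩, (hWN hy).1⟩
  have hdense : ∀ P : Set M, IsOpen P → P ⊆ W' → P.Nonempty → (P ∩ D).Nonempty := by
    intro P hP hPW hPne
    obtain ⟨k, hk, N', hN', ⟨z, hz⟩, hPN⟩ := baire_per g hP.isLocallyClosed hPne
      (fun y hy => hper y (hWN (hPW hy)).2)
    exact ⟨z, hz.1, k, hk, mem_interior.2 ⟨_, hPN, hP.inter hN', hz⟩⟩
  have hfinish : ∀ j : ℕ, 0 < j → ¬ (W' ⊆ Fx M (h ^ j)) := by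
    intro j hj hsub
    refine hxD ⟨m * j, Nat.mul_pos hm hj, mem_interior.2 ⟨W', ?_, hWo, hxW'⟩⟩
    rwa [pow_mul]
  have hDU : ∀ j : ℕ, 0 < j → ∀ y ∈ W', y ∈ closure (W' ∩ interior (Fx M (h ^ j))) → y ∈ D →
      y ∈ interior (Fx M (h ^ j)) := by
    rintro j hj y hy hyc ⟨k, hk, hyk⟩
    refine lemA n (h ^ j) hk ?_ (closure_mono inter_subset_right hyc)
    have : (h ^ j) ^ k = (g ^ k) ^ (m * j) := by
      rw [hh, ← pow_mul, ← pow_mul, ← pow_mul]; congr 1; ring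
    rw [this]
    exact interior_mono (Fx_pow _ _) hyk
  have hUfix : ∀ j : ℕ, 0 < j → ∀ y ∈ W', y ∈ interior (Fx M (h ^ j)) → h • y = y := by
    intro j hj
    set U := W' ∩ interior (Fx M (h ^ j)) with hU
    have hUo : IsOpen U := hWo.inter isOpen_interior
    have hUi : ∀ y ∈ U, h • y ∈ U := by
      rintro y ⟨hy, hyF⟩
      refine ⟨hWi y hy, mem_interior.2 ⟨h • interior (Fx M (h ^ j)), ?_, isOpen_interior.smul h,
        smul_mem_smul_set hyF⟩⟩
      rintro _ ⟨w, hw, rfl⟩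
      have hw' : h ^ j • w = w := Fx_int hw
      show h ^ j • h • w = h • w
      rw [smul_smul, ← pow_succ, pow_succ', mul_smul, hw']
    obtain ⟨d, ⟨hdW, hdD⟩, hdU⟩ : ∃ d ∈ W' ∩ D, d ∉ U := by
      by_contra hc
      push Not at hc
      exact hfinish j hj (fix_of_dense hdense hWo fun y hy => interior_subset (hc y hy).2)
    have hdc : d ∉ closure U := fun hc => hdU ⟨hdW, hDU j hj d hdW hc hdD⟩
    set k : M → M := U.piecewise (fun y => h • y) id with hk
    have hkU : ∀ y ∈ U, k y = h • y := fun y hy => Set.piecewise_eq_of_mem _ _ _ hy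
    have hkU' : ∀ y, y ∉ U → k y = y := fun y hy => Set.piecewise_eq_of_notMem _ _ _ hy
    have hkc : ContinuousOn k W' := by
      refine ContinuousOn.piecewise ?_ (continuous_const_smul h).continuousOn continuousOn_id
      rintro y ⟨hy, hyf⟩
      rw [hUo.frontier_eq] at hyf
      exact hEf y hy fun hyD => hyf.2 ⟨hy, hDU j hj y hy hyf.1 hyD⟩
    have hkm : MapsTo k W' W' := by
      intro y hy
      by_cases hyU : y ∈ U
      · rw [hkU y hyU]; exact hWi y hy
      · rwa [hkU' y hyU]
    have hki : ∀ i : ℕ, ∀ y ∈ U, k^[i] y = h ^ i • y := by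
      intro i
      induction i with
      | zero => intro y _; simp
      | succ i ih =>
        intro y hy
        rw [Function.iterate_succ_apply, hkU y hy, ih _ (hUi y hy), smul_smul, ← pow_succ]
    have hkid := newman n hWo hWp hkc hkm
      ⟨d, mem_interior.2 ⟨W' ∩ (closure U)ᶜ, fun u hu => ⟨hu.1, hkU' u fun h => hu.2 (subset_closure h)⟩,
        hWo.inter isClosed_closure.isOpen_compl, hdW, hdc⟩⟩ j hj (by
        intro y hy
        by_cases hyU : y ∈ U
        · rw [hki j y hyU]; exact Fx_int hyU.2
        · exact Function.iterate_fixed (hkU' y hyU) j)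
    intro y hy hyF
    rw [← hkU y ⟨hy, hyF⟩]
    exact hkid y hy
  refine hfinish 1 one_pos ?_
  rw [pow_one]
  refine fix_of_dense hdense hWo ?_
  rintro y ⟨hy, k, hk, hyk⟩
  refine hUfix k hk y hy ?_
  have : h ^ k = (g ^ k) ^ m := by rw [hh, ← pow_mul, ← pow_mul, mul_comm]
  rw [this]
  exact interior_mono (Fx_pow _ _) hyk

theorem final (n : ℕ) [ChartedSpace (EuclideanSpace ℝ (Fin n)) M] [ConnectedSpace M] (g : G) (hg : (interior (Fx M g)).Nonempty) : ∀ x : M, g • x = x := by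
  have hcl : IsClosed (interior (Fx M g)) := by
    refine isClosed_of_closure_subset fun x hx => ?_
    have hxf : x ∈ Fx M g := closure_minimal interior_subset (Fx_closed g) hx
    obtain ⟨W, hWo, -, hxW, -, -, hper⟩ := exists_inv g hxf univ_mem
    obtain ⟨m, hm, hxm⟩ := main_claim n g hWo hper x hxW
    exact lemA n g hm hxm hx
  have := IsClopen.eq_univ ⟨hcl, isOpen_interior⟩ hg
  intro x
  have hx : x ∈ interior (Fx M g) := by rw [this]; trivial
  exact Fx_int hx

end act
end Newm
end

/-- Rigidity: for a countable group acting on a connected topological `n`-manifold with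
Hausdorff orbit space, any element whose fixed-point set has nonempty interior acts as
the identity. -/
theorem stmt14 {G M : Type*} (n : ℕ) [Group G] [Countable G]
    [TopologicalSpace M] [ConnectedSpace M] [T2Space M]
    [ChartedSpace (EuclideanSpace ℝ (Fin n)) M]
    [MulAction G M] [ContinuousConstSMul G M]
    [T2Space (Quotient (MulAction.orbitRel G M))]
    (g : G) (hg : (interior {x : M | g • x = x}).Nonempty) :
    ∀ x : M, g • x = x := by
  haveI : LocallyCompactSpace M := ChartedSpace.locallyCompactSpace (EuclideanSpace ℝ (Fin n)) M
  haveI : LocallyConnectedSpace M := ChartedSpace.locallyConnectedSpace (EuclideanSpace ℝ (Fin n)) M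
  exact Newm.final n g hg
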